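/- (Optimism.) Consider any δ ∈ (0,1) and suppose the constant c_b > 0 in the Q-EarlySettled-Advantage algorithm is sufficiently large. Then with probability at least 1 − δ, the iterates of the algorithm satisfy Q_h^k(s,a) ≥ Q_h^*(s,a) and V_h^k(s) ≥ V_h^*(s) simultaneously for all (s, a, k, h) ∈ S × A × [K] × [H]. -/

import Mathlib

open MeasureTheory Finset

/-- A finite-horizon MDP with horizon `H`, non-stationary transition kernels `P h s a ·`,
and deterministic rewards `r h s a ∈ [0,1]`. -/
structure MDP (S A : Type) [Fintype S] [Fintype A] where
  H : ℕ
  P : ℕ → S → A → S → ℝ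
  r : ℕ → S → A → ℝ
  H_pos : 1 ≤ H
  P_nonneg : ∀ h s a s', 0 ≤ P h s a s'
  P_sum_one : ∀ h s a, ∑ s', P h s a s' = 1
  r_nonneg : ∀ h s a, 0 ≤ r h s a
  r_le_one : ∀ h s a, r h s a ≤ 1

namespace MDP

variable {S A : Type} [Fintype S] [Fintype A] [Nonempty S] [Nonempty A]

/-- Optimal Q-function, defined by backward induction on the remaining number of steps
(`Qstar` below instantiates the fuel as `H + 1 - h`, so that values at step `H + 1`
vanish and the Bellman optimality equation holds for `1 ≤ h ≤ H`). -/
noncomputable def QstarAux (M : MDP S A) : ℕ → ℕ → S → A → ℝ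
  | 0, _, _, _ => 0
  | (fuel + 1), h, s, a =>
      M.r h s a + ∑ s' : S, M.P h s a s' *
        (Finset.univ.sup' Finset.univ_nonempty fun a' => QstarAux M fuel (h + 1) s' a')

/-- The optimal Q-function `Q_h^⋆`. -/
noncomputable def Qstar (M : MDP S A) (h : ℕ) (s : S) (a : A) : ℝ :=
  QstarAux M (M.H + 1 - h) h s a

/-- The optimal value function `V_h^⋆`. -/
noncomputable def Vstar (M : MDP S A) (h : ℕ) (s : S) : ℝ :=
  Finset.univ.sup' Finset.univ_nonempty fun a => M.Qstar h s a

/-- Value function `V_h^π` of a deterministic policy `π`, by backward induction. -/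
noncomputable def VpolAux (M : MDP S A) (π : ℕ → S → A) : ℕ → ℕ → S → ℝ
  | 0, _, _ => 0
  | (fuel + 1), h, s =>
      M.r h s (π h s) + ∑ s' : S, M.P h s (π h s) s' * VpolAux M π fuel (h + 1) s'

/-- The value function `V_h^π` of a deterministic policy `π`. -/
noncomputable def Vpol (M : MDP S A) (π : ℕ → S → A) (h : ℕ) (s : S) : ℝ :=
  VpolAux M π (M.H + 1 - h) h s

/-- Conditional variance `Var_{h,s,a}(V) = P_{h,s,a}(V²) - (P_{h,s,a} V)²`. -/
noncomputable def varP (M : MDP S A) (h : ℕ) (s : S) (a : A) (V : S → ℝ) : ℝ :=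
  (∑ s' : S, M.P h s a s' * (V s') ^ 2) - (∑ s' : S, M.P h s a s' * V s') ^ 2

end MDP

/-- The Q-learning rate `η_n = (H+1)/(H+n)`. -/
noncomputable def lr (H n : ℕ) : ℝ := (H + 1 : ℝ) / (H + n)

/-- `η_n^N`: equal to `η_n ∏_{i=n+1}^N (1 - η_i)` for `1 ≤ n ≤ N` (hence `η_n` for `N = n`),
`0` for `N < n`, and `η_0^N = ∏_{i=1}^N (1 - η_i)` (which is `1` if `N = 0` and `0` otherwise,
since `1 - η_1 = 0`). -/
noncomputable def lrProd (H n N : ℕ) : ℝ :=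
  if N < n then 0
  else (if n = 0 then 1 else lr H n) * ∏ i ∈ Finset.Icc (n + 1) N, (1 - lr H i)

/-- The log factor `log(SAT/δ)` with `T = KH`. -/
noncomputable def iota (S A : Type) [Fintype S] [Fintype A] (K H : ℕ) (δ : ℝ) : ℝ :=
  Real.log ((Fintype.card S : ℝ) * (Fintype.card A) * (K * H) / δ)

/-- The trajectory `(s_h^k, a_h^k)` is generated by online interaction with the MDP `M`:
states and actions are adapted to the filtration `𝓕` (with time index `(k-1)H + h`
corresponding to step `h` of episode `k`), and conditionally on the history,
`s_{h+1}^k ∼ P_h(· | s_h^k, a_h^k)`. -/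
def IsMDPTrajectory {S A : Type} [Fintype S] [Fintype A] [DecidableEq S]
    [MeasurableSpace S] [MeasurableSpace A]
    {Ω : Type} [m0 : MeasurableSpace Ω] (μ : Measure Ω)
    (M : MDP S A) (K : ℕ) (𝓕 : Filtration ℕ m0)
    (st : ℕ → ℕ → Ω → S) (ac : ℕ → ℕ → Ω → A) : Prop :=
  (∀ k ∈ Finset.Icc 1 K, ∀ h ∈ Finset.Icc 1 (M.H + 1),
      Measurable[𝓕 ((k - 1) * M.H + h)] (st k h)) ∧
  (∀ k ∈ Finset.Icc 1 K, ∀ h ∈ Finset.Icc 1 M.H,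
      Measurable[𝓕 ((k - 1) * M.H + h)] (ac k h)) ∧
  (∀ k ∈ Finset.Icc 1 K, ∀ h ∈ Finset.Icc 1 M.H, ∀ s' : S,
      μ[(fun ω => if st k (h + 1) ω = s' then (1 : ℝ) else 0) | 𝓕 ((k - 1) * M.H + h)]
        =ᵐ[μ] fun ω => M.P h (st k h ω) (ac k h ω) s')

/-- The **Q-EarlySettled-Advantage** algorithm (Algorithms 1–2 of the paper), run for `K`
episodes on the MDP `M` with bonus constant `cb` and failure probability `δ`.
The fields record the trajectory `(s_h^k, a_h^k)`, the greedy policies `π^k`, the visit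
counters, all Q/value estimates and auxiliary statistics, together with the initialization
and update equations defining the algorithm.  A quantity carrying episode index `k`
denotes its value at the *beginning* of episode `k` (`N k` is the counter at the *end*
of episode `k`, with `N 0 = 0`); `kvis n h s a` is the episode of the `n`-th visit of
`(s,a)` at step `h`. -/
structure QLAlg {S A : Type} [Fintype S] [Fintype A] [Nonempty S] [Nonempty A]
    [DecidableEq S] [DecidableEq A] (M : MDP S A) (K : ℕ) (cb δ : ℝ) where
  /-- `s_h^k` : the state visited at step `h` of episode `k` -/
  st : ℕ → ℕ → S
  /-- `a_h^k` : the action taken at step `h` of episode `k` -/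
  ac : ℕ → ℕ → A
  /-- `π^k` : the greedy policy executed during episode `k` -/
  pol : ℕ → ℕ → S → A
  /-- `N_h^k(s,a)` : number of visits of `(s,a)` at step `h` by the end of episode `k` -/
  N : ℕ → ℕ → S → A → ℕ
  /-- the combined Q-estimate `Q_h^k` -/
  Q : ℕ → ℕ → S → A → ℝ
  /-- the Hoeffding-bonus optimistic estimate `Q_h^{UCB,k}` -/
  QUCB : ℕ → ℕ → S → A → ℝ
  /-- the pessimistic estimate `Q_h^{LCB,k}` -/
  QLCB : ℕ → ℕ → S → A → ℝ
  /-- the reference-advantage estimate `Q_h^{R,k}` -/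
  QR : ℕ → ℕ → S → A → ℝ
  /-- `V_h^k` -/
  V : ℕ → ℕ → S → ℝ
  /-- `V_h^{LCB,k}` -/
  VLCB : ℕ → ℕ → S → ℝ
  /-- the reference value `V_h^{R,k}` -/
  VR : ℕ → ℕ → S → ℝ
  /-- the flag `u_ref^k` governing the final reference update -/
  uref : ℕ → ℕ → S → Prop
  /-- running mean `μ_h^{ref,k}` of the reference -/
  muRef : ℕ → ℕ → S → A → ℝ
  /-- running second moment `σ_h^{ref,k}` of the reference -/
  sigRef : ℕ → ℕ → S → A → ℝ
  /-- running weighted mean `μ_h^{adv,k}` of the advantage -/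
  muAdv : ℕ → ℕ → S → A → ℝ
  /-- running weighted second moment `σ_h^{adv,k}` of the advantage -/
  sigAdv : ℕ → ℕ → S → A → ℝ
  /-- the aggregated bonus `B_h^{R,k}` -/
  BR : ℕ → ℕ → S → A → ℝ
  /-- the bonus difference `δ_h^{R,k}` -/
  dR : ℕ → ℕ → S → A → ℝ
  /-- `bR k h` : the exploration bonus `b_h^R` computed at step `h` of episode `k` -/
  bR : ℕ → ℕ → ℝ
  /-- `kvis n h s a = k_h^n(s,a)` : the episode of the `n`-th visit of `(s,a)` at step `h` -/
  kvis : ℕ → ℕ → S → A → ℕ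
  greedy : ∀ k h s a, Q k h s a ≤ Q k h s (pol k h s)
  act_eq : ∀ k h, ac k h = pol k h (st k h)
  N_init : ∀ h s a, N 0 h s a = 0
  N_upd : ∀ k ∈ Icc 1 K, ∀ h ∈ Icc 1 M.H, ∀ s a,
    N k h s a = N (k - 1) h s a + (if s = st k h ∧ a = ac k h then 1 else 0)
  Q_init : ∀ h ∈ Icc 1 M.H, ∀ s a, Q 1 h s a = M.H
  QUCB_init : ∀ h ∈ Icc 1 M.H, ∀ s a, QUCB 1 h s a = M.H
  QR_init : ∀ h ∈ Icc 1 M.H, ∀ s a, QR 1 h s a = M.H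
  QLCB_init : ∀ h ∈ Icc 1 M.H, ∀ s a, QLCB 1 h s a = 0
  V_init : ∀ h ∈ Icc 1 M.H, ∀ s, V 1 h s = M.H
  VR_init : ∀ h ∈ Icc 1 M.H, ∀ s, VR 1 h s = M.H
  VLCB_init : ∀ h ∈ Icc 1 M.H, ∀ s, VLCB 1 h s = 0
  uref_init : ∀ h s, uref 1 h s
  mom_init : ∀ h s a, muRef 1 h s a = 0 ∧ sigRef 1 h s a = 0 ∧ muAdv 1 h s a = 0 ∧
    sigAdv 1 h s a = 0 ∧ BR 1 h s a = 0 ∧ dR 1 h s a = 0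
  V_terminal : ∀ k s, V k (M.H + 1) s = 0 ∧ VR k (M.H + 1) s = 0 ∧ VLCB k (M.H + 1) s = 0
  QUCB_upd : ∀ k ∈ Icc 1 K, ∀ h ∈ Icc 1 M.H, ∀ s a,
    QUCB (k + 1) h s a =
      if s = st k h ∧ a = ac k h then
        (1 - lr M.H (N k h s a)) * QUCB k h s a
          + lr M.H (N k h s a) *
            (M.r h s a + V k (h + 1) (st k (h + 1))
              + cb * Real.sqrt ((M.H : ℝ) ^ 3 * iota S A K M.H δ / (N k h s a)))
      else QUCB k h s a
  QLCB_upd : ∀ k ∈ Icc 1 K, ∀ h ∈ Icc 1 M.H, ∀ s a,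
    QLCB (k + 1) h s a =
      if s = st k h ∧ a = ac k h then
        (1 - lr M.H (N k h s a)) * QLCB k h s a
          + lr M.H (N k h s a) *
            (M.r h s a + VLCB k (h + 1) (st k (h + 1))
              - cb * Real.sqrt ((M.H : ℝ) ^ 3 * iota S A K M.H δ / (N k h s a)))
      else QLCB k h s a
  muRef_upd : ∀ k ∈ Icc 1 K, ∀ h ∈ Icc 1 M.H, ∀ s a,
    muRef (k + 1) h s a =
      if s = st k h ∧ a = ac k h then
        (1 - 1 / (N k h s a : ℝ)) * muRef k h s a
          + (1 / (N k h s a : ℝ)) * VR k (h + 1) (st k (h + 1))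
      else muRef k h s a
  sigRef_upd : ∀ k ∈ Icc 1 K, ∀ h ∈ Icc 1 M.H, ∀ s a,
    sigRef (k + 1) h s a =
      if s = st k h ∧ a = ac k h then
        (1 - 1 / (N k h s a : ℝ)) * sigRef k h s a
          + (1 / (N k h s a : ℝ)) * (VR k (h + 1) (st k (h + 1))) ^ 2
      else sigRef k h s a
  muAdv_upd : ∀ k ∈ Icc 1 K, ∀ h ∈ Icc 1 M.H, ∀ s a,
    muAdv (k + 1) h s a =
      if s = st k h ∧ a = ac k h then
        (1 - lr M.H (N k h s a)) * muAdv k h s a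
          + lr M.H (N k h s a) * (V k (h + 1) (st k (h + 1)) - VR k (h + 1) (st k (h + 1)))
      else muAdv k h s a
  sigAdv_upd : ∀ k ∈ Icc 1 K, ∀ h ∈ Icc 1 M.H, ∀ s a,
    sigAdv (k + 1) h s a =
      if s = st k h ∧ a = ac k h then
        (1 - lr M.H (N k h s a)) * sigAdv k h s a
          + lr M.H (N k h s a) *
              (V k (h + 1) (st k (h + 1)) - VR k (h + 1) (st k (h + 1))) ^ 2
      else sigAdv k h s a
  BR_upd : ∀ k ∈ Icc 1 K, ∀ h ∈ Icc 1 M.H, ∀ s a,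
    BR (k + 1) h s a =
      if s = st k h ∧ a = ac k h then
        cb * Real.sqrt (iota S A K M.H δ / (N k h s a)) *
          (Real.sqrt (sigRef (k + 1) h s a - (muRef (k + 1) h s a) ^ 2)
            + Real.sqrt (M.H) * Real.sqrt (sigAdv (k + 1) h s a - (muAdv (k + 1) h s a) ^ 2))
      else BR k h s a
  dR_upd : ∀ k ∈ Icc 1 K, ∀ h ∈ Icc 1 M.H, ∀ s a,
    dR (k + 1) h s a =
      if s = st k h ∧ a = ac k h then BR (k + 1) h s a - BR k h s a else dR k h s a
  bR_def : ∀ k ∈ Icc 1 K, ∀ h ∈ Icc 1 M.H,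
    bR k h = BR (k + 1) h (st k h) (ac k h)
      + (1 - lr M.H (N k h (st k h) (ac k h))) * dR (k + 1) h (st k h) (ac k h)
          / lr M.H (N k h (st k h) (ac k h))
      + cb * (M.H : ℝ) ^ 2 * iota S A K M.H δ
          / (N k h (st k h) (ac k h) : ℝ) ^ ((3 : ℝ) / 4)
  QR_upd : ∀ k ∈ Icc 1 K, ∀ h ∈ Icc 1 M.H, ∀ s a,
    QR (k + 1) h s a =
      if s = st k h ∧ a = ac k h then
        (1 - lr M.H (N k h s a)) * QR k h s a
          + lr M.H (N k h s a) *
            (M.r h s a + V k (h + 1) (st k (h + 1)) - VR k (h + 1) (st k (h + 1))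
              + muRef (k + 1) h s a + bR k h)
      else QR k h s a
  Q_upd : ∀ k ∈ Icc 1 K, ∀ h ∈ Icc 1 M.H, ∀ s a,
    Q (k + 1) h s a =
      if s = st k h ∧ a = ac k h then
        min (QR (k + 1) h s a) (min (QUCB (k + 1) h s a) (Q k h s a))
      else Q k h s a
  V_upd : ∀ k ∈ Icc 1 K, ∀ h ∈ Icc 1 M.H, ∀ s,
    V (k + 1) h s =
      if s = st k h then Finset.univ.sup' Finset.univ_nonempty (fun a => Q (k + 1) h s a)
      else V k h s
  VLCB_upd : ∀ k ∈ Icc 1 K, ∀ h ∈ Icc 1 M.H, ∀ s,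
    VLCB (k + 1) h s =
      if s = st k h then
        max (Finset.univ.sup' Finset.univ_nonempty (fun a => QLCB (k + 1) h s a)) (VLCB k h s)
      else VLCB k h s
  VR_upd_pos : ∀ k ∈ Icc 1 K, ∀ h ∈ Icc 1 M.H,
    (1 < V (k + 1) h (st k h) - VLCB (k + 1) h (st k h) ∨ uref k h (st k h)) →
      VR (k + 1) h (st k h) = V (k + 1) h (st k h)
  VR_upd_neg : ∀ k ∈ Icc 1 K, ∀ h ∈ Icc 1 M.H,
    ¬(1 < V (k + 1) h (st k h) - VLCB (k + 1) h (st k h) ∨ uref k h (st k h)) →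
      VR (k + 1) h (st k h) = VR k h (st k h)
  VR_upd_other : ∀ k ∈ Icc 1 K, ∀ h ∈ Icc 1 M.H, ∀ s, s ≠ st k h →
    VR (k + 1) h s = VR k h s
  uref_upd_pos : ∀ k ∈ Icc 1 K, ∀ h ∈ Icc 1 M.H,
    1 < V (k + 1) h (st k h) - VLCB (k + 1) h (st k h) → uref (k + 1) h (st k h)
  uref_upd_neg : ∀ k ∈ Icc 1 K, ∀ h ∈ Icc 1 M.H,
    ¬(1 < V (k + 1) h (st k h) - VLCB (k + 1) h (st k h)) → ¬uref (k + 1) h (st k h)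
  uref_upd_other : ∀ k ∈ Icc 1 K, ∀ h ∈ Icc 1 M.H, ∀ s, s ≠ st k h →
    (uref (k + 1) h s ↔ uref k h s)
  kvis_spec : ∀ h ∈ Icc 1 M.H, ∀ s a n, 1 ≤ n → n ≤ N K h s a →
    kvis n h s a ∈ Icc 1 K ∧ N (kvis n h s a) h s a = n ∧
      st (kvis n h s a) h = s ∧ ac (kvis n h s a) h = a

/-!
Each estimate `Q`, unrolled, is a running average over the visits of a pair `(s, a)`, so `Q ≥ Q⋆`
follows from concentration of the sampled values around `P_h V`, once the values `V` of the
preceding episodes are known to dominate `V⋆`: an induction on episodes. The reference-advantage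
bonus is a data-dependent variance, so a Bernstein bound is required whose width is measured by the
random weights and functions of the run itself. It comes from Freedman's exponential supermartingale
applied for a grid of tilts, with a union bound over the number of visits that fixes the final
weights in advance; the same bound for the squared samples replaces the true variance by the
empirical one. The samples qualify because everything the algorithm holds at the beginning of an
episode is a function of the past trajectory.
-/

/-! ## Expectation and variance under weights on a finite set -/

section FiniteVariance

variable {S : Type*} [Fintype S] {p f g : S → ℝ} {B : ℝ}

/-- The variance of `f` under the probability weights `p`. -/
def finVar (p f : S → ℝ) : ℝ := p ⬝ᵥ f ^ 2 - (p ⬝ᵥ f) ^ 2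

theorem dotProduct_const_of_mem_stdSimplex (hp : p ∈ stdSimplex ℝ S) (c : ℝ) :
    (p ⬝ᵥ fun _ => c) = c := by
  rw [dotProduct, ← sum_mul, hp.2, one_mul]

theorem dotProduct_mono_of_mem_stdSimplex (hp : p ∈ stdSimplex ℝ S) (hfg : ∀ s, f s ≤ g s) :
    p ⬝ᵥ f ≤ p ⬝ᵥ g :=
  dotProduct_le_dotProduct_of_nonneg_left hfg hp.1

theorem dotProduct_le_of_mem_stdSimplex (hp : p ∈ stdSimplex ℝ S) (hf : ∀ s, f s ≤ B) :
    p ⬝ᵥ f ≤ B :=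
  (dotProduct_mono_of_mem_stdSimplex hp hf).trans_eq (dotProduct_const_of_mem_stdSimplex hp B)

theorem le_dotProduct_of_mem_stdSimplex (hp : p ∈ stdSimplex ℝ S) (hf : ∀ s, B ≤ f s) :
    B ≤ p ⬝ᵥ f :=
  (dotProduct_const_of_mem_stdSimplex hp B).symm.trans_le (dotProduct_mono_of_mem_stdSimplex hp hf)

theorem abs_dotProduct_le_of_mem_stdSimplex (hp : p ∈ stdSimplex ℝ S) (hf : ∀ s, |f s| ≤ B) :
    |p ⬝ᵥ f| ≤ B :=
  abs_le.2 ⟨le_dotProduct_of_mem_stdSimplex hp fun s => (abs_le.1 (hf s)).1,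
    dotProduct_le_of_mem_stdSimplex hp fun s => (abs_le.1 (hf s)).2⟩

theorem sq_dotProduct_le (hp : p ∈ stdSimplex ℝ S) (f : S → ℝ) : (p ⬝ᵥ f) ^ 2 ≤ p ⬝ᵥ f ^ 2 :=
  Real.pow_arith_mean_le_arith_mean_pow_of_even univ p f (fun s _ => hp.1 s) hp.2 even_two

theorem finVar_nonneg (hp : p ∈ stdSimplex ℝ S) (f : S → ℝ) : 0 ≤ finVar p f :=
  sub_nonneg.2 (sq_dotProduct_le hp f)

theorem finVar_le_sq (hp : p ∈ stdSimplex ℝ S) (hf : ∀ s, |f s| ≤ B) : finVar p f ≤ B ^ 2 :=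
  (sub_le_self _ (sq_nonneg _)).trans <|
    dotProduct_le_of_mem_stdSimplex hp fun s => sq_le_sq' (abs_le.1 (hf s)).1 (abs_le.1 (hf s)).2

theorem finVar_neg (p f : S → ℝ) : finVar p (-f) = finVar p f := by
  simp only [finVar, dotProduct_neg, even_two, Even.neg_pow]

theorem finVar_smul (c : ℝ) (p f : S → ℝ) : finVar p (c • f) = c ^ 2 * finVar p f := by
  simp only [finVar, smul_pow, dotProduct_smul, smul_eq_mul]
  ring

theorem dotProduct_sub_sq_eq_finVar (hp : p ∈ stdSimplex ℝ S) (f : S → ℝ) :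
    (p ⬝ᵥ fun s => (f s - p ⬝ᵥ f) ^ 2) = finVar p f := by
  have expand : (fun s => (f s - p ⬝ᵥ f) ^ 2)
      = f ^ 2 - (2 * (p ⬝ᵥ f)) • f + fun _ => (p ⬝ᵥ f) ^ 2 := by
    ext s
    simp only [Pi.add_apply, Pi.sub_apply, Pi.pow_apply, Pi.smul_apply, smul_eq_mul]
    ring
  rw [expand, dotProduct_add, dotProduct_sub, dotProduct_smul,
    dotProduct_const_of_mem_stdSimplex hp, finVar, smul_eq_mul]
  ring

theorem dotProduct_exp_sub_finVar_le_one (hp : p ∈ stdSimplex ℝ S)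
    (hf : ∀ s, |f s - p ⬝ᵥ f| ≤ 1) :
    (p ⬝ᵥ fun s => Real.exp (f s - p ⬝ᵥ f - finVar p f)) ≤ 1 := by
  have exp_le (s : S) : Real.exp (f s - p ⬝ᵥ f) ≤ 1 + (f s - p ⬝ᵥ f) + (f s - p ⬝ᵥ f) ^ 2 := by
    linarith [(abs_le.1 (Real.abs_exp_sub_one_sub_id_le (hf s))).2]
  have centred : (p ⬝ᵥ fun s => f s - p ⬝ᵥ f) = 0 := by
    have := dotProduct_sub p f fun _ => p ⬝ᵥ f
    rwa [dotProduct_const_of_mem_stdSimplex hp, sub_self] at this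
  have mgf_le : (p ⬝ᵥ fun s => Real.exp (f s - p ⬝ᵥ f)) ≤ Real.exp (finVar p f) :=
    calc (p ⬝ᵥ fun s => Real.exp (f s - p ⬝ᵥ f))
        ≤ p ⬝ᵥ ((fun _ => 1) + (fun s => f s - p ⬝ᵥ f) + fun s => (f s - p ⬝ᵥ f) ^ 2) :=
          dotProduct_mono_of_mem_stdSimplex hp exp_le
      _ = finVar p f + 1 := by
          rw [dotProduct_add, dotProduct_add, dotProduct_const_of_mem_stdSimplex hp, centred,
            dotProduct_sub_sq_eq_finVar hp]
          ring
      _ ≤ Real.exp (finVar p f) := Real.add_one_le_exp _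
  have factor : (fun s => Real.exp (f s - p ⬝ᵥ f - finVar p f))
      = Real.exp (-finVar p f) • fun s => Real.exp (f s - p ⬝ᵥ f) := by
    ext s
    rw [Pi.smul_apply, smul_eq_mul, ← Real.exp_add, neg_add_eq_sub]
  rw [factor, dotProduct_smul, smul_eq_mul, Real.exp_neg]
  exact inv_mul_le_one_of_le₀ mgf_le (Real.exp_pos _).le

end FiniteVariance

/-! ## Freedman's exponential supermartingale -/

section Freedman

theorem measurable_apply_of_countable {Ω S : Type*} [Countable S] [MeasurableSpace S]
    [MeasurableSingletonClass S] {G : MeasurableSpace Ω} {ξ : Ω → S} {φ : Ω → S → ℝ}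
    (hξ : Measurable[G] ξ) (hφ : ∀ s, Measurable[G] fun ω => φ ω s) :
    Measurable[G] fun ω => φ ω (ξ ω) :=
  (measurable_from_prod_countable_left (f := fun z : Ω × S => φ z.1 z.2) hφ).comp
    (measurable_id.prodMk hξ)

variable {Ω S : Type*} {G m0 : MeasurableSpace Ω} {μ : Measure Ω} [Fintype S] [DecidableEq S]

/-- `q ω` is a version of the conditional distribution of the finite-valued random variable `ξ`
given the `σ`-algebra `G`. -/
structure HasCondDist (μ : Measure Ω) (G : MeasurableSpace Ω) (ξ : Ω → S) (q : Ω → S → ℝ) :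
    Prop where
  measurable : ∀ s, Measurable[G] fun ω => q ω s
  mem_stdSimplex : ∀ ω, q ω ∈ stdSimplex ℝ S
  condExp_eq : ∀ s, μ[fun ω => if ξ ω = s then (1 : ℝ) else 0 | G] =ᵐ[μ] fun ω => q ω s

namespace HasCondDist

variable {ξ : Ω → S} {q φ : Ω → S → ℝ} {C : ℝ}

theorem measurable_dotProduct (h : HasCondDist μ G ξ q) (hφ : ∀ s, Measurable[G] fun ω => φ ω s) :
    Measurable[G] fun ω => q ω ⬝ᵥ φ ω :=
  Finset.measurable_fun_sum (m := G) _ fun s _ => (h.measurable s).mul (hφ s)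

theorem measurable_finVar (h : HasCondDist μ G ξ q) (hφ : ∀ s, Measurable[G] fun ω => φ ω s) :
    Measurable[G] fun ω => finVar (q ω) (φ ω) :=
  (h.measurable_dotProduct (φ := fun ω => φ ω ^ 2) fun s => (hφ s).pow_const 2).sub
    ((h.measurable_dotProduct hφ).pow_const 2)

variable [MeasurableSpace S] [MeasurableSingletonClass S] [IsFiniteMeasure μ]

theorem condExp_apply (h : HasCondDist μ G ξ q) (hG : G ≤ m0) (hξ : Measurable ξ)
    (hφ : ∀ s, Measurable[G] fun ω => φ ω s) (hC : ∀ ω s, |φ ω s| ≤ C) :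
    μ[fun ω => φ ω (ξ ω) | G] =ᵐ[μ] fun ω => q ω ⬝ᵥ φ ω := by
  let ind (s : S) (ω : Ω) : ℝ := if ξ ω = s then 1 else 0
  have ind_int (s : S) : Integrable (ind s) μ :=
    .of_bound (Measurable.ite (hξ (measurableSet_singleton s)) measurable_const
      measurable_const).aestronglyMeasurable 1 (.of_forall fun ω => by
        simp only [ind]; split_ifs <;> simp)
  have prod_int (s : S) : Integrable ((φ · s) * ind s) μ :=
    (ind_int s).bdd_mul ((hφ s).mono hG le_rfl).aestronglyMeasurable
      (.of_forall fun ω => hC ω s)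
  have decompose : (fun ω => φ ω (ξ ω)) = ∑ s, (φ · s) * ind s := by
    ext ω
    simp only [Finset.sum_apply, Pi.mul_apply, ind, mul_ite, mul_one, mul_zero, sum_ite_eq,
      mem_univ, if_true]
  have pull_out (s : S) : μ[(φ · s) * ind s | G] =ᵐ[μ] (φ · s) * μ[ind s | G] :=
    condExp_mul_of_stronglyMeasurable_left (hφ s).stronglyMeasurable (prod_int s) (ind_int s)
  rw [decompose]
  filter_upwards [condExp_finsetSum (fun s _ => prod_int s) G,
    eventually_countable_forall.2 pull_out, eventually_countable_forall.2 h.condExp_eq]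
    with ω hsum hpull hq
  rw [hsum, Finset.sum_apply, dotProduct]
  exact sum_congr rfl fun s _ => by rw [hpull s, Pi.mul_apply, hq s, mul_comm]

theorem condExp_exp_sub_finVar_le_one (h : HasCondDist μ G ξ q) (hG : G ≤ m0) (hξ : Measurable ξ)
    (hφ : ∀ s, Measurable[G] fun ω => φ ω s) (hone : ∀ ω s, |φ ω s - q ω ⬝ᵥ φ ω| ≤ 1) :
    μ[fun ω => Real.exp (φ ω (ξ ω) - q ω ⬝ᵥ φ ω - finVar (q ω) (φ ω)) | G] ≤ᵐ[μ] 1 := by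
  have meas (s : S) :
      Measurable[G] fun ω => Real.exp (φ ω s - q ω ⬝ᵥ φ ω - finVar (q ω) (φ ω)) :=
    (((hφ s).sub (h.measurable_dotProduct hφ)).sub (h.measurable_finVar hφ)).exp
  have bound (ω : Ω) (s : S) :
      |Real.exp (φ ω s - q ω ⬝ᵥ φ ω - finVar (q ω) (φ ω))| ≤ Real.exp 1 := by
    rw [Real.abs_exp, Real.exp_le_exp]
    linarith [(abs_le.1 (hone ω s)).2, finVar_nonneg (h.mem_stdSimplex ω) (φ ω)]
  filter_upwards [h.condExp_apply hG hξ meas bound] with ω hω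
  exact hω.trans_le (dotProduct_exp_sub_finVar_le_one (h.mem_stdSimplex ω) (hone ω))

end HasCondDist

end Freedman

section Supermartingale

variable {Ω : Type*} {m0 : MeasurableSpace Ω} {μ : Measure Ω} {K : ℕ} {C : ℝ} {X : ℕ → Ω → ℝ}

theorem integral_mul_le_of_condExp_le_one [IsFiniteMeasure μ] {G : MeasurableSpace Ω}
    (hG : G ≤ m0) {Y Z : Ω → ℝ} (hZ : Measurable[G] Z) (hZ0 : 0 ≤ Z) (hZint : Integrable Z μ)
    (hY : Integrable Y μ) (hZY : Integrable (Z * Y) μ) (hone : μ[Y | G] ≤ᵐ[μ] 1) :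
    ∫ ω, Z ω * Y ω ∂μ ≤ ∫ ω, Z ω ∂μ := by
  have pull_out := condExp_mul_of_stronglyMeasurable_left hZ.stronglyMeasurable hZY hY
  calc ∫ ω, Z ω * Y ω ∂μ = ∫ ω, (μ[Z * Y | G]) ω ∂μ := (integral_condExp hG).symm
    _ ≤ ∫ ω, Z ω ∂μ := by
      refine integral_mono_ae integrable_condExp hZint ?_
      filter_upwards [pull_out, hone] with ω hpull hle
      rw [hpull]
      exact mul_le_of_le_one_right (hZ0 ω) hle

theorem measurable_sum_Icc {𝓖 : Filtration ℕ m0}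
    (hX : ∀ j ∈ Icc 1 K, Measurable[𝓖 (j + 1)] (X j)) :
    Measurable[𝓖 (K + 1)] fun ω => ∑ j ∈ Icc 1 K, X j ω :=
  Finset.measurable_fun_sum (m := 𝓖 (K + 1)) _ fun j hj =>
    (hX j hj).mono (𝓖.mono (Nat.succ_le_succ (mem_Icc.1 hj).2)) le_rfl

theorem integrable_exp_sum_Icc [IsFiniteMeasure μ] (hX : ∀ j ∈ Icc 1 K, Measurable (X j))
    (hC : ∀ j ∈ Icc 1 K, ∀ ω, X j ω ≤ C) :
    Integrable (fun ω => Real.exp (∑ j ∈ Icc 1 K, X j ω)) μ := by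
  refine .of_bound (Finset.measurable_fun_sum _ hX).exp.aestronglyMeasurable
    (Real.exp (∑ _j ∈ Icc 1 K, C)) (.of_forall fun ω => ?_)
  rw [Real.norm_eq_abs, Real.abs_exp, Real.exp_le_exp]
  exact sum_le_sum fun j hj => hC j hj ω

theorem integral_exp_sum_Icc_le_one [IsProbabilityMeasure μ] {𝓖 : Filtration ℕ m0}
    (hX : ∀ j ∈ Icc 1 K, Measurable[𝓖 (j + 1)] (X j)) (hC : ∀ j ∈ Icc 1 K, ∀ ω, X j ω ≤ C)
    (hone : ∀ j ∈ Icc 1 K, μ[fun ω => Real.exp (X j ω) | 𝓖 j] ≤ᵐ[μ] 1) :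
    ∫ ω, Real.exp (∑ j ∈ Icc 1 K, X j ω) ∂μ ≤ 1 := by
  induction K with
  | zero => simp
  | succ K ih =>
    have hsub {j : ℕ} (hj : j ∈ Icc 1 K) : j ∈ Icc 1 (K + 1) := Icc_subset_Icc_right K.le_succ hj
    have hlast : K + 1 ∈ Icc 1 (K + 1) := right_mem_Icc.2 K.succ_pos
    have hXm (j : ℕ) (hj : j ∈ Icc 1 (K + 1)) : Measurable (X j) := (hX j hj).mono (𝓖.le _) le_rfl
    have split : (fun ω => Real.exp (∑ j ∈ Icc 1 (K + 1), X j ω))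
        = fun ω => Real.exp (∑ j ∈ Icc 1 K, X j ω) * Real.exp (X (K + 1) ω) := by
      ext ω
      rw [sum_Icc_succ_top K.succ_pos, Real.exp_add]
    have prod_int := integrable_exp_sum_Icc (μ := μ) hXm hC
    rw [split] at prod_int ⊢
    have last_int : Integrable (fun ω => Real.exp (X (K + 1) ω)) μ :=
      .of_bound (hXm _ hlast).exp.aestronglyMeasurable (Real.exp C) (.of_forall fun ω => by
        rw [Real.norm_eq_abs, Real.abs_exp, Real.exp_le_exp]; exact hC _ hlast ω)
    exact (integral_mul_le_of_condExp_le_one (𝓖.le _)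
      (measurable_sum_Icc fun j hj => hX j (hsub hj)).exp (fun ω => (Real.exp_pos _).le)
      (integrable_exp_sum_Icc (fun j hj => hXm j (hsub hj)) fun j hj => hC j (hsub hj))
      last_int prod_int (hone _ hlast)).trans
      (ih (fun j hj => hX j (hsub hj)) (fun j hj => hC j (hsub hj)) fun j hj => hone j (hsub hj))

theorem measureReal_le_sum_le_exp_neg [IsProbabilityMeasure μ] {𝓖 : Filtration ℕ m0}
    (hX : ∀ j ∈ Icc 1 K, Measurable[𝓖 (j + 1)] (X j)) (hC : ∀ j ∈ Icc 1 K, ∀ ω, X j ω ≤ C)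
    (hone : ∀ j ∈ Icc 1 K, μ[fun ω => Real.exp (X j ω) | 𝓖 j] ≤ᵐ[μ] 1) (L : ℝ) :
    μ.real {ω | L ≤ ∑ j ∈ Icc 1 K, X j ω} ≤ Real.exp (-L) := by
  have exp_int := integrable_exp_sum_Icc (μ := μ) (fun j hj => (hX j hj).mono (𝓖.le _) le_rfl) hC
  have markov := mul_meas_ge_le_integral_of_nonneg (.of_forall fun ω => (Real.exp_pos _).le)
    exp_int (Real.exp L)
  simp only [Real.exp_le_exp] at markov
  rw [Real.exp_neg, ← one_div, le_div_iff₀' (Real.exp_pos L)]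
  exact markov.trans (integral_exp_sum_Icc_le_one hX hC hone)

theorem measureReal_freedman_le {S : Type*} [Fintype S] [DecidableEq S] [MeasurableSpace S]
    [MeasurableSingletonClass S] [IsProbabilityMeasure μ] {𝓖 : Filtration ℕ m0}
    {ξ : ℕ → Ω → S} {q φ : ℕ → Ω → S → ℝ} (hξ : ∀ j ∈ Icc 1 K, Measurable[𝓖 (j + 1)] (ξ j))
    (hq : ∀ j ∈ Icc 1 K, HasCondDist μ (𝓖 j) (ξ j) (q j))
    (hφ : ∀ j ∈ Icc 1 K, ∀ s, Measurable[𝓖 j] fun ω => φ j ω s)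
    (hhalf : ∀ j ∈ Icc 1 K, ∀ ω s, |φ j ω s| ≤ 1 / 2) (L : ℝ) :
    μ.real {ω | L ≤ ∑ j ∈ Icc 1 K,
        (φ j ω (ξ j ω) - q j ω ⬝ᵥ φ j ω - finVar (q j ω) (φ j ω))} ≤ Real.exp (-L) := by
  have hone (j : ℕ) (hj : j ∈ Icc 1 K) (ω : Ω) (s : S) : |φ j ω s - q j ω ⬝ᵥ φ j ω| ≤ 1 := by
    have mean_le := abs_dotProduct_le_of_mem_stdSimplex ((hq j hj).mem_stdSimplex ω) (hhalf j hj ω)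
    linarith [abs_sub (φ j ω s) (q j ω ⬝ᵥ φ j ω), hhalf j hj ω s]
  refine measureReal_le_sum_le_exp_neg (𝓖 := 𝓖) (C := 1) (fun j hj => ?_) (fun j hj ω => ?_)
    (fun j hj => (hq j hj).condExp_exp_sub_finVar_le_one (𝓖.le j)
      ((hξ j hj).mono (𝓖.le _) le_rfl) (hφ j hj) (hone j hj)) L
  · have mono : 𝓖 j ≤ 𝓖 (j + 1) := 𝓖.mono j.le_succ
    exact ((measurable_apply_of_countable (hξ j hj) fun s => (hφ j hj s).mono mono le_rfl).sub
      (((hq j hj).measurable_dotProduct (hφ j hj)).mono mono le_rfl)).sub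
      (((hq j hj).measurable_finVar (hφ j hj)).mono mono le_rfl)
  · linarith [(abs_le.1 (hone j hj ω (ξ j ω))).2,
      finVar_nonneg ((hq j hj).mem_stdSimplex ω) (φ j ω)]

end Supermartingale

/-! ## Learning rates -/

section LearningRate

variable {m n N : ℕ}

theorem lr_zero (n : ℕ) : lr 0 n = 1 / n := by
  simp only [lr, Nat.cast_zero, zero_add]

theorem lr_one (m : ℕ) : lr m 1 = 1 := by
  rw [lr, Nat.cast_one]
  exact div_self m.cast_add_one_ne_zero

theorem lr_nonneg (m n : ℕ) : 0 ≤ lr m n := by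
  unfold lr
  positivity

theorem lr_pos (hn : 1 ≤ n) : 0 < lr m n := by
  unfold lr
  positivity

theorem lr_le_one (hn : 1 ≤ n) : lr m n ≤ 1 := by
  have : (1 : ℝ) ≤ n := by exact_mod_cast hn
  exact div_le_one_of_le₀ (by linarith) (by positivity)

theorem one_sub_lr_nonneg (hn : 1 ≤ n) : 0 ≤ 1 - lr m n :=
  sub_nonneg.2 (lr_le_one hn)

theorem one_sub_lr_succ (m n : ℕ) : 1 - lr m (n + 1) = n / (m + n + 1) := by
  have : (m + n + 1 : ℝ) ≠ 0 := by positivity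
  rw [lr, Nat.cast_succ, ← add_assoc]
  field_simp
  ring

theorem one_le_lr_mul (hn : 1 ≤ n) : 1 ≤ lr m n * n := by
  have : (1 : ℝ) ≤ n := by exact_mod_cast hn
  rw [lr, div_mul_eq_mul_div, one_le_div (by positivity)]
  nlinarith [(Nat.cast_nonneg m : (0 : ℝ) ≤ m)]

theorem lr_mul_le (m n : ℕ) : lr m n * n ≤ m + 1 := by
  rw [lr, div_mul_eq_mul_div]
  exact div_le_of_le_mul₀ (by positivity) (by positivity)
    (mul_le_mul_of_nonneg_left (by linarith [(Nat.cast_nonneg m : (0 : ℝ) ≤ m)]) (by positivity))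

theorem one_sub_lr_succ_mul_lr_le (m n : ℕ) : (1 - lr m (n + 1)) * lr m n ≤ lr m (n + 1) := by
  rw [one_sub_lr_succ, lr, lr, Nat.cast_succ, div_mul_div_comm, ← add_assoc,
    mul_comm (m + n + 1 : ℝ), mul_div_mul_comm]
  exact mul_le_of_le_one_left (by positivity)
    (div_le_one_of_le₀ (by linarith [(Nat.cast_nonneg m : (0 : ℝ) ≤ m)]) (by positivity))

theorem lrProd_self (hn : 1 ≤ n) : lrProd m n n = lr m n := by
  simp only [lrProd, lt_irrefl, if_false, Nat.one_le_iff_ne_zero.1 hn,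
    Icc_eq_empty_of_lt n.lt_succ_self, prod_empty, mul_one]

theorem lrProd_eq_zero (h : N < n) : lrProd m n N = 0 :=
  if_pos h

theorem lrProd_succ (h : n ≤ N) : lrProd m n (N + 1) = (1 - lr m (N + 1)) * lrProd m n N := by
  rw [lrProd, lrProd, if_neg (by omega), if_neg (not_lt_of_ge h), prod_Icc_succ_top (by omega)]
  ring

theorem lrProd_mem_Icc (hn : 1 ≤ n) (N : ℕ) : lrProd m n N ∈ Set.Icc 0 (lr m N) := by
  rcases lt_or_ge N n with h | h
  · rw [lrProd_eq_zero h]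
    exact ⟨le_rfl, lr_nonneg m N⟩
  · induction N, h using Nat.le_induction with
    | base => rw [lrProd_self hn]; exact ⟨lr_nonneg m n, le_rfl⟩
    | succ N h ih =>
      have hrate : 0 ≤ 1 - lr m (N + 1) := one_sub_lr_nonneg N.succ_pos
      rw [lrProd_succ h]
      exact ⟨mul_nonneg hrate ih.1,
        (mul_le_mul_of_nonneg_left ih.2 hrate).trans (one_sub_lr_succ_mul_lr_le m N)⟩

end LearningRate

/-! ## Running averages over visits -/

section RunningAverage

open scoped Classical in
/-- The number of times `j ∈ {1, …, k}` at which `vis j` holds. -/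
noncomputable def visitCount (vis : ℕ → Prop) (k : ℕ) : ℕ :=
  Nat.count (fun j => vis (j + 1)) k

open scoped Classical in
/-- The average of the values `y j` at the visits `j ≤ k`, updated at the `n`-th visit with the
rate `lr m n`; `m = 0` is the empirical mean. Its value is `0` before the first visit. -/
noncomputable def runningAvg (m : ℕ) (vis : ℕ → Prop) (y : ℕ → ℝ) : ℕ → ℝ
  | 0 => 0
  | k + 1 =>
    if vis (k + 1) then
      (1 - lr m (visitCount vis (k + 1))) * runningAvg m vis y k
        + lr m (visitCount vis (k + 1)) * y (k + 1)
    else runningAvg m vis y k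

/-- The variance of the values `y j` under the weights of `runningAvg`. -/
noncomputable def runningVar (m : ℕ) (vis : ℕ → Prop) (y : ℕ → ℝ) (k : ℕ) : ℝ :=
  runningAvg m vis (fun j => y j ^ 2) k - runningAvg m vis y k ^ 2

open scoped Classical in
/-- The weight of the time `j` in `runningAvg` once there have been `N` visits. It depends on
`vis` only through the times up to `j`, as `lrProd m n N = 0` for `N < n`. -/
noncomputable def visitWeight (m : ℕ) (vis : ℕ → Prop) (N j : ℕ) : ℝ :=
  if vis j then lrProd m (visitCount vis j) N else 0

variable {m : ℕ} {vis : ℕ → Prop} {y z : ℕ → ℝ} {j k K : ℕ}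

theorem visitCount_zero (vis : ℕ → Prop) : visitCount vis 0 = 0 := by
  rw [visitCount, Nat.count_zero]

theorem visitCount_succ_of_vis (h : vis (k + 1)) :
    visitCount vis (k + 1) = visitCount vis k + 1 := by
  rw [visitCount, Nat.count_succ, if_pos h, visitCount]

theorem visitCount_succ_of_not_vis (h : ¬vis (k + 1)) :
    visitCount vis (k + 1) = visitCount vis k := by
  rw [visitCount, Nat.count_succ, if_neg h, visitCount, add_zero]

theorem visitCount_mono (vis : ℕ → Prop) : Monotone (visitCount vis) := by
  classical exact Nat.count_monotone _

theorem visitCount_le (vis : ℕ → Prop) (k : ℕ) : visitCount vis k ≤ k := by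
  classical exact Nat.count_le _

theorem visitCount_lt_of_vis (hj : vis j) (hkj : k < j) : visitCount vis k < visitCount vis j := by
  obtain ⟨i, rfl⟩ := Nat.exists_eq_add_of_lt hkj
  rw [visitCount_succ_of_vis hj]
  exact Nat.lt_succ_of_le (visitCount_mono vis (Nat.le_add_right k i))

theorem visitCount_pos_of_vis (hj : vis j) (hj1 : 1 ≤ j) : 1 ≤ visitCount vis j :=
  (Nat.zero_le _).trans_lt (visitCount_lt_of_vis hj hj1)

theorem runningAvg_succ_of_vis (h : vis (k + 1)) :
    runningAvg m vis y (k + 1) = (1 - lr m (visitCount vis (k + 1))) * runningAvg m vis y k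
      + lr m (visitCount vis (k + 1)) * y (k + 1) :=
  if_pos h

theorem runningAvg_succ_of_not_vis (h : ¬vis (k + 1)) :
    runningAvg m vis y (k + 1) = runningAvg m vis y k :=
  if_neg h

theorem eq_runningAvg {x : ℕ → ℝ}
    (hvis : ∀ j < k, vis (j + 1) → x (j + 1) = (1 - lr m (visitCount vis (j + 1))) * x j
      + lr m (visitCount vis (j + 1)) * y (j + 1))
    (hnot : ∀ j < k, ¬vis (j + 1) → x (j + 1) = x j)
    (hinit : x 0 = 0 ∨ 1 ≤ visitCount vis k) : x k = runningAvg m vis y k := by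
  induction k with
  | zero =>
    rw [visitCount_zero] at hinit
    exact hinit.resolve_right (by omega)
  | succ k ih =>
    replace ih := ih (fun j hj => hvis j (by omega)) fun j hj => hnot j (by omega)
    by_cases h : vis (k + 1)
    · rw [hvis k k.lt_succ_self h, runningAvg_succ_of_vis h]
      rcases Nat.eq_zero_or_pos (visitCount vis k) with h0 | hpos
      · rw [visitCount_succ_of_vis h, h0, zero_add, lr_one, sub_self, zero_mul, zero_mul]
      · rw [ih (Or.inr hpos)]
    · rw [visitCount_succ_of_not_vis h] at hinit
      rw [hnot k k.lt_succ_self h, runningAvg_succ_of_not_vis h, ih hinit]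

theorem runningAvg_congr (h : ∀ j ∈ Icc 1 k, vis j → y j = z j) :
    runningAvg m vis y k = runningAvg m vis z k := by
  induction k with
  | zero => rfl
  | succ k ih =>
    replace ih := ih fun j hj => h j (Icc_subset_Icc_right k.le_succ hj)
    by_cases hv : vis (k + 1)
    · rw [runningAvg_succ_of_vis hv, runningAvg_succ_of_vis hv, ih,
        h _ (right_mem_Icc.2 k.succ_pos) hv]
    · rw [runningAvg_succ_of_not_vis hv, runningAvg_succ_of_not_vis hv, ih]

theorem runningAvg_mono (h : ∀ j ∈ Icc 1 k, vis j → y j ≤ z j) :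
    runningAvg m vis y k ≤ runningAvg m vis z k := by
  induction k with
  | zero => exact le_rfl
  | succ k ih =>
    replace ih := ih fun j hj => h j (Icc_subset_Icc_right k.le_succ hj)
    by_cases hv : vis (k + 1)
    · rw [runningAvg_succ_of_vis hv, runningAvg_succ_of_vis hv]
      exact add_le_add
        (mul_le_mul_of_nonneg_left ih (one_sub_lr_nonneg (visitCount_pos_of_vis hv k.succ_pos)))
        (mul_le_mul_of_nonneg_left (h _ (right_mem_Icc.2 k.succ_pos) hv) (lr_nonneg _ _))
    · rwa [runningAvg_succ_of_not_vis hv, runningAvg_succ_of_not_vis hv]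

theorem runningAvg_const (c : ℝ) (hk : 1 ≤ visitCount vis k) :
    runningAvg m vis (fun _ => c) k = c :=
  (eq_runningAvg (x := fun _ => c) (fun _ _ _ => by ring) (fun _ _ _ => rfl) (Or.inr hk)).symm

theorem runningAvg_add (m : ℕ) (vis : ℕ → Prop) (y z : ℕ → ℝ) (k : ℕ) :
    runningAvg m vis (fun j => y j + z j) k = runningAvg m vis y k + runningAvg m vis z k := by
  symm
  refine eq_runningAvg (x := fun k => runningAvg m vis y k + runningAvg m vis z k)
    (fun j _ hv => ?_) (fun j _ hv => ?_) (Or.inl (add_zero 0))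
  · rw [runningAvg_succ_of_vis hv, runningAvg_succ_of_vis hv]
    ring
  · rw [runningAvg_succ_of_not_vis hv, runningAvg_succ_of_not_vis hv]

theorem runningAvg_const_mul (c : ℝ) (m : ℕ) (vis : ℕ → Prop) (y : ℕ → ℝ) (k : ℕ) :
    runningAvg m vis (fun j => c * y j) k = c * runningAvg m vis y k := by
  symm
  refine eq_runningAvg (x := fun k => c * runningAvg m vis y k)
    (fun j _ hv => ?_) (fun j _ hv => ?_) (Or.inl (mul_zero c))
  · rw [runningAvg_succ_of_vis hv]
    ring
  · rw [runningAvg_succ_of_not_vis hv]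

theorem runningAvg_sub (m : ℕ) (vis : ℕ → Prop) (y z : ℕ → ℝ) (k : ℕ) :
    runningAvg m vis (fun j => y j - z j) k = runningAvg m vis y k - runningAvg m vis z k := by
  rw [eq_sub_iff_add_eq, ← runningAvg_add]
  simp only [sub_add_cancel]

theorem runningAvg_le (hk : 1 ≤ visitCount vis k) {c : ℝ} (h : ∀ j ∈ Icc 1 k, vis j → y j ≤ c) :
    runningAvg m vis y k ≤ c :=
  (runningAvg_mono h).trans_eq (runningAvg_const c hk)

theorem le_runningAvg (hk : 1 ≤ visitCount vis k) {c : ℝ} (h : ∀ j ∈ Icc 1 k, vis j → c ≤ y j) :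
    c ≤ runningAvg m vis y k :=
  (runningAvg_const c hk).symm.trans_le (runningAvg_mono h)

theorem runningAvg_nonneg (h : ∀ j, 0 ≤ y j) : 0 ≤ runningAvg m vis y k := by
  have zero_eq : runningAvg m vis (fun _ => 0 * 0) k = 0 := by
    rw [runningAvg_const_mul, zero_mul]
  rw [← zero_eq]
  exact runningAvg_mono fun j _ _ => by simpa using h j

theorem sq_runningAvg_le (m : ℕ) (vis : ℕ → Prop) (y : ℕ → ℝ) (k : ℕ) :
    runningAvg m vis y k ^ 2 ≤ runningAvg m vis (fun j => y j ^ 2) k := by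
  induction k with
  | zero => exact (zero_pow two_ne_zero).le
  | succ k ih =>
    by_cases hv : vis (k + 1)
    · rw [runningAvg_succ_of_vis hv, runningAvg_succ_of_vis hv]
      have hpos := visitCount_pos_of_vis hv k.succ_pos
      have convex := (Even.convexOn_pow even_two).2 (Set.mem_univ (runningAvg m vis y k))
        (Set.mem_univ (y (k + 1))) (one_sub_lr_nonneg (m := m) hpos) (lr_nonneg m _)
        (sub_add_cancel 1 _)
      exact convex.trans (add_le_add_left (mul_le_mul_of_nonneg_left ih (one_sub_lr_nonneg hpos)) _)
    · rwa [runningAvg_succ_of_not_vis hv, runningAvg_succ_of_not_vis hv]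

theorem runningVar_nonneg (m : ℕ) (vis : ℕ → Prop) (y : ℕ → ℝ) (k : ℕ) :
    0 ≤ runningVar m vis y k :=
  sub_nonneg.2 (sq_runningAvg_le m vis y k)

theorem runningVar_congr (h : ∀ j ∈ Icc 1 k, vis j → y j = z j) :
    runningVar m vis y k = runningVar m vis z k := by
  rw [runningVar, runningVar, runningAvg_congr h,
    runningAvg_congr fun j hj hv => congrArg (· ^ 2) (h j hj hv)]

theorem visitCount_mul_runningVar_mono (vis : ℕ → Prop) (y : ℕ → ℝ) :
    Monotone fun k => visitCount vis k * runningVar 0 vis y k := by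
  refine monotone_nat_of_le_succ fun k => ?_
  by_cases hv : vis (k + 1)
  · simp only [runningVar, runningAvg_succ_of_vis hv, visitCount_succ_of_vis hv, lr_zero]
    set n := visitCount vis k
    set a := runningAvg 0 vis y k
    have increment : ((n + 1 : ℕ) : ℝ) * ((1 - 1 / ((n + 1 : ℕ) : ℝ)) *
          runningAvg 0 vis (fun j => y j ^ 2) k + 1 / ((n + 1 : ℕ) : ℝ) * y (k + 1) ^ 2
        - ((1 - 1 / ((n + 1 : ℕ) : ℝ)) * a + 1 / ((n + 1 : ℕ) : ℝ) * y (k + 1)) ^ 2)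
        = n * (runningAvg 0 vis (fun j => y j ^ 2) k - a ^ 2)
          + n / (n + 1) * (y (k + 1) - a) ^ 2 := by
      push_cast
      field_simp
      ring
    rw [increment]
    exact le_add_of_nonneg_right (by positivity)
  · simp only [runningVar, runningAvg_succ_of_not_vis hv, visitCount_succ_of_not_vis hv, le_rfl]

theorem runningAvg_sqrt_runningVar_div_le (hm : 1 ≤ m) (vis : ℕ → Prop) (y : ℕ → ℝ) (k : ℕ) :
    runningAvg m vis (fun j => √(runningVar 0 vis y j / visitCount vis j)) k
      ≤ 2 * √(runningVar 0 vis y k / visitCount vis k) := by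
  induction k with
  | zero => exact mul_nonneg zero_le_two (Real.sqrt_nonneg _)
  | succ k ih =>
    by_cases hv : vis (k + 1)
    · have mul_sqrt (k : ℕ) : visitCount vis k * √(runningVar 0 vis y k / visitCount vis k)
          = √(visitCount vis k * runningVar 0 vis y k) := by
        rcases Nat.eq_zero_or_pos (visitCount vis k) with h0 | hpos
        · simp only [h0, Nat.cast_zero, zero_mul, Real.sqrt_zero]
        · rw [← Real.sqrt_sq (Nat.cast_nonneg (α := ℝ) _), ← Real.sqrt_mul (sq_nonneg _),
            Real.sqrt_sq (Nat.cast_nonneg _)]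
          congr 1
          field_simp
      have growth := Real.sqrt_le_sqrt (visitCount_mul_runningVar_mono vis y k.le_succ)
      rw [← mul_sqrt, ← mul_sqrt, Nat.succ_eq_add_one] at growth
      rw [runningAvg_succ_of_vis hv]
      set x := √(runningVar 0 vis y k / visitCount vis k)
      set x' := √(runningVar 0 vis y (k + 1) / visitCount vis (k + 1))
      have hx' : 0 ≤ x' := Real.sqrt_nonneg _
      have hm' : (1 : ℝ) ≤ m := by exact_mod_cast hm
      rw [visitCount_succ_of_vis hv] at growth ⊢
      push_cast at growth
      set n := visitCount vis k
      have hn : (0 : ℝ) < m + n + 1 := by positivity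
      calc (1 - lr m (n + 1)) * runningAvg m vis _ k + lr m (n + 1) * x'
          ≤ (1 - lr m (n + 1)) * (2 * x) + lr m (n + 1) * x' := by
            gcongr
            exact one_sub_lr_nonneg n.succ_pos
        _ = (2 * (n * x) + (m + 1) * x') / (m + n + 1) := by
            rw [one_sub_lr_succ, lr, Nat.cast_succ, ← add_assoc]
            ring
        _ ≤ 2 * x' := by
            rw [div_le_iff₀ hn]
            nlinarith [mul_nonneg (sub_nonneg.2 hm') hx']
    · rw [runningAvg_succ_of_not_vis hv]
      simpa only [runningVar, runningAvg_succ_of_not_vis hv, visitCount_succ_of_not_vis hv] using ih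

theorem visitWeight_of_not_vis (h : ¬vis j) (N : ℕ) : visitWeight m vis N j = 0 :=
  if_neg h

theorem visitWeight_mem_Icc (m : ℕ) (vis : ℕ → Prop) (N : ℕ) (hj : 1 ≤ j) :
    visitWeight m vis N j ∈ Set.Icc 0 (lr m N) := by
  by_cases h : vis j
  · rw [visitWeight, if_pos h]
    exact lrProd_mem_Icc (visitCount_pos_of_vis h hj) N
  · rw [visitWeight_of_not_vis h]
    exact ⟨le_rfl, lr_nonneg m N⟩

theorem visitWeight_visitCount_succ (hv : vis (k + 1)) (hj : j ≤ k) :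
    visitWeight m vis (visitCount vis (k + 1)) j
      = (1 - lr m (visitCount vis (k + 1))) * visitWeight m vis (visitCount vis k) j := by
  by_cases h : vis j
  · rw [visitWeight, visitWeight, if_pos h, if_pos h, visitCount_succ_of_vis hv,
      lrProd_succ (visitCount_mono vis hj)]
  · rw [visitWeight_of_not_vis h, visitWeight_of_not_vis h, mul_zero]

theorem sum_visitWeight_mul_self (m : ℕ) (vis : ℕ → Prop) (y : ℕ → ℝ) (k : ℕ) :
    ∑ j ∈ Icc 1 k, visitWeight m vis (visitCount vis k) j * y j = runningAvg m vis y k := by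
  induction k with
  | zero => rfl
  | succ k ih =>
    rw [sum_Icc_succ_top k.succ_pos]
    by_cases hv : vis (k + 1)
    · rw [runningAvg_succ_of_vis hv, ← ih, mul_sum, visitWeight, if_pos hv,
        lrProd_self (visitCount_pos_of_vis hv k.succ_pos)]
      refine congrArg₂ _ (sum_congr rfl fun j hj => ?_) rfl
      rw [visitWeight_visitCount_succ hv (mem_Icc.1 hj).2, mul_assoc]
    · rw [runningAvg_succ_of_not_vis hv, visitWeight_of_not_vis hv, zero_mul, add_zero,
        visitCount_succ_of_not_vis hv, ih]

theorem sum_visitWeight_mul (m : ℕ) (vis : ℕ → Prop) (y : ℕ → ℝ) (hk : k ≤ K) :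
    ∑ j ∈ Icc 1 K, visitWeight m vis (visitCount vis k) j * y j = runningAvg m vis y k := by
  rw [← sum_visitWeight_mul_self]
  refine (sum_subset (Icc_subset_Icc_right hk) fun j _ hj => ?_).symm
  by_cases h : vis j
  · have hkj : k < j := by simp only [mem_Icc] at *; omega
    rw [visitWeight, if_pos h, lrProd_eq_zero (visitCount_lt_of_vis h hkj), zero_mul]
  · rw [visitWeight_of_not_vis h, zero_mul]

end RunningAverage

/-! ## Bernstein bounds for running averages of samples -/

section Grid

variable {S : Type*} {m : ℕ} {vis : ℕ → Prop} {f : ℕ → S → ℝ} {B L : ℝ} {K : ℕ}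

theorem le_two_mul_sqrt_add_of_grid {x y b : ℝ} (hb : 0 < b) (hL : 0 < L) (hy : 0 ≤ y)
    (hyK : y ≤ (b * K) ^ 2 * L)
    (hgrid : ∀ i ∈ range (K + 1), (b * (i + 1))⁻¹ * x - (b * (i + 1))⁻¹ ^ 2 * y < L) :
    x ≤ 2 * √(L * y) + b * L := by
  obtain ⟨q, hq, rfl⟩ : ∃ q, 0 ≤ q ∧ q ^ 2 * L = y :=
    ⟨√(y / L), Real.sqrt_nonneg _, by rw [Real.sq_sqrt (by positivity)]; field_simp⟩
  have hqK : q / b ≤ K := by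
    rw [div_le_iff₀' hb]
    exact (pow_le_pow_iff_left₀ hq (by positivity) two_ne_zero).1 (le_of_mul_le_mul_right hyK hL)
  set i := ⌊q / b⌋₊
  have hi : i ∈ range (K + 1) := mem_range.2 (Nat.lt_succ_of_le (Nat.floor_le_of_le hqK))
  have hle : (i : ℝ) * b ≤ q := (le_div_iff₀ hb).1 (Nat.floor_le (by positivity))
  have hlt : q < (i + 1) * b := (div_lt_iff₀ hb).1 (Nat.lt_floor_add_one _)
  have hsqrt : √(L * (q ^ 2 * L)) = q * L := by
    rw [← Real.sqrt_sq (mul_nonneg hq hL.le)]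
    ring_nf
  have tail := hgrid i hi
  set c := b * (i + 1)
  have hc : 0 < c := by positivity
  have hx : x < L * c + q ^ 2 * L / c := by
    have := mul_lt_mul_of_pos_right tail hc
    field_simp at this ⊢
    nlinarith
  have hratio : q ^ 2 * L / c ≤ q * L := by
    rw [div_le_iff₀ hc]
    nlinarith [mul_nonneg hq hL.le]
  rw [hsqrt]
  nlinarith

/-- The test functions to which Freedman's tail bound is applied: the weights of the running
average after `N` visits, tilted by the `i`-th parameter of the grid. -/
noncomputable def gridFun (m : ℕ) (vis : ℕ → Prop) (f : ℕ → S → ℝ) (B : ℝ) (N i j : ℕ) : S → ℝ :=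
  ((2 * B * lr m N * (i + 1))⁻¹ * visitWeight m vis N j) • f j

theorem abs_gridFun_le (hB : 0 < B) (hf : ∀ j s, |f j s| ≤ B) {N j : ℕ} (hN : 1 ≤ N) (hj : 1 ≤ j)
    (i : ℕ) (s : S) : |gridFun m vis f B N i j s| ≤ 1 / 2 := by
  have hr : 0 < lr m N := lr_pos hN
  obtain ⟨hw0, hw⟩ := visitWeight_mem_Icc m vis N hj
  have hi : (1 : ℝ) ≤ i + 1 := le_add_of_nonneg_left i.cast_nonneg
  rw [gridFun, Pi.smul_apply, smul_eq_mul, abs_mul, abs_of_nonneg (by positivity),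
    inv_mul_eq_div, div_mul_eq_mul_div, div_le_iff₀ (by positivity)]
  calc visitWeight m vis N j * |f j s| ≤ lr m N * B := by gcongr; exact hf j s
    _ ≤ lr m N * B * (i + 1) := le_mul_of_one_le_right (by positivity) hi
    _ = 1 / 2 * (2 * B * lr m N * (i + 1)) := by ring

end Grid

section BernsteinBound

variable {S : Type*} [Fintype S] {m : ℕ} {vis : ℕ → Prop} {p : S → ℝ} {ξ : ℕ → S}
  {f : ℕ → S → ℝ} {B L : ℝ} {k K : ℕ}

/-- Bernstein's inequality, at confidence level `exp (-L)`, for the running average of the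
deviations of the samples `f j (ξ j)` from their means under `p`, where `|f j| ≤ B`. -/
def BernsteinBound (m : ℕ) (vis : ℕ → Prop) (p : S → ℝ) (ξ : ℕ → S) (f : ℕ → S → ℝ) (B L : ℝ)
    (k : ℕ) : Prop :=
  runningAvg m vis (fun j => f j (ξ j) - p ⬝ᵥ f j) k ≤
    2 * √(lr m (visitCount vis k) * L * runningAvg m vis (fun j => finVar p (f j)) k)
      + 2 * B * (lr m (visitCount vis k) * L)

theorem BernsteinBound.le_sqrt (h : BernsteinBound m vis p ξ f B L k)
    (hp : p ∈ stdSimplex ℝ S) (hf : ∀ j s, |f j s| ≤ B) (hL : 0 ≤ L)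
    (hk : 1 ≤ visitCount vis k) :
    runningAvg m vis (fun j => f j (ξ j) - p ⬝ᵥ f j) k
      ≤ 4 * B * √(lr m (visitCount vis k) * L) := by
  have hB : 0 ≤ B := (abs_nonneg _).trans (hf 0 (ξ 0))
  have trivial_bound : runningAvg m vis (fun j => f j (ξ j) - p ⬝ᵥ f j) k ≤ 2 * B :=
    runningAvg_le hk fun j _ _ => by
      linarith [(abs_le.1 (hf j (ξ j))).2,
        (abs_le.1 (abs_dotProduct_le_of_mem_stdSimplex hp (hf j))).1]
  have var_le : runningAvg m vis (fun j => finVar p (f j)) k ≤ B ^ 2 :=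
    runningAvg_le hk fun j _ _ => finVar_le_sq hp (hf j)
  unfold BernsteinBound at h
  have hx : 0 ≤ lr m (visitCount vis k) * L := mul_nonneg (lr_nonneg _ _) hL
  set x := lr m (visitCount vis k) * L
  have sqrt_le : √(x * runningAvg m vis (fun j => finVar p (f j)) k) ≤ B * √x := by
    calc √(x * runningAvg m vis (fun j => finVar p (f j)) k) ≤ √(x * B ^ 2) := by gcongr
      _ = B * √x := by rw [Real.sqrt_mul hx, Real.sqrt_sq hB, mul_comm]
  rcases le_total (√x) 1 with hle | hge
  · have : x ≤ √x := by nlinarith [Real.sq_sqrt hx, Real.sqrt_nonneg x]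
    nlinarith
  · nlinarith

theorem sum_sq_visitWeight_mul_le {y : ℕ → ℝ} (hy : ∀ j, 0 ≤ y j) (hkK : k ≤ K) :
    ∑ j ∈ Icc 1 K, visitWeight m vis (visitCount vis k) j ^ 2 * y j
      ≤ lr m (visitCount vis k) * runningAvg m vis y k := by
  rw [← sum_visitWeight_mul m vis y hkK, mul_sum]
  refine sum_le_sum fun j hj => ?_
  obtain ⟨hw0, hw⟩ := visitWeight_mem_Icc m vis (visitCount vis k) (mem_Icc.1 hj).1
  rw [sq, mul_assoc]
  exact mul_le_mul_of_nonneg_right hw (mul_nonneg hw0 (hy j))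

theorem le_sum_gridFun_sub_finVar (hp : p ∈ stdSimplex ℝ S) (hkK : k ≤ K) (i : ℕ) :
    (2 * B * lr m (visitCount vis k) * (i + 1))⁻¹
        * runningAvg m vis (fun j => f j (ξ j) - p ⬝ᵥ f j) k
      - (2 * B * lr m (visitCount vis k) * (i + 1))⁻¹ ^ 2
        * (lr m (visitCount vis k) * runningAvg m vis (fun j => finVar p (f j)) k)
    ≤ ∑ j ∈ Icc 1 K, (gridFun m vis f B (visitCount vis k) i j (ξ j)
        - p ⬝ᵥ gridFun m vis f B (visitCount vis k) i j
        - finVar p (gridFun m vis f B (visitCount vis k) i j)) := by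
  unfold gridFun
  set c := (2 * B * lr m (visitCount vis k) * (i + 1))⁻¹
  set w := visitWeight m vis (visitCount vis k)
  have expand : ∑ j ∈ Icc 1 K, (((c * w j) • f j) (ξ j) - p ⬝ᵥ ((c * w j) • f j)
      - finVar p ((c * w j) • f j))
      = c * runningAvg m vis (fun j => f j (ξ j) - p ⬝ᵥ f j) k
        - c ^ 2 * ∑ j ∈ Icc 1 K, w j ^ 2 * finVar p (f j) := by
    rw [← sum_visitWeight_mul m vis _ hkK, mul_sum, mul_sum, ← sum_sub_distrib]
    refine sum_congr rfl fun j _ => ?_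
    rw [finVar_smul, dotProduct_smul, Pi.smul_apply, smul_eq_mul, smul_eq_mul]
    ring
  rw [expand]
  gcongr
  exact sum_sq_visitWeight_mul_le (fun j => finVar_nonneg hp (f j)) hkK

theorem bernsteinBound_of_grid (hp : p ∈ stdSimplex ℝ S) (hB : 0 < B) (hf : ∀ j s, |f j s| ≤ B)
    (hL : 1 ≤ L) (hkK : k ≤ K) (hk : 1 ≤ visitCount vis k)
    (hgrid : ∀ i ∈ range (K + 1), ∑ j ∈ Icc 1 K,
      (gridFun m vis f B (visitCount vis k) i j (ξ j)
        - p ⬝ᵥ gridFun m vis f B (visitCount vis k) i j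
        - finVar p (gridFun m vis f B (visitCount vis k) i j)) < L) :
    BernsteinBound m vis p ξ f B L k := by
  have tail := fun i hi =>
    (le_sum_gridFun_sub_finVar (B := B) (m := m) hp hkK i).trans_lt (hgrid i hi)
  have hr : 0 < lr m (visitCount vis k) := lr_pos hk
  have hNK : (visitCount vis k : ℝ) ≤ K := by exact_mod_cast (visitCount_le vis k).trans hkK
  have hrK : 1 ≤ lr m (visitCount vis k) * K :=
    (one_le_lr_mul hk).trans (mul_le_mul_of_nonneg_left hNK hr.le)
  unfold BernsteinBound
  set r := lr m (visitCount vis k)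
  set v := runningAvg m vis (fun j => finVar p (f j)) k
  have hv0 : 0 ≤ v := runningAvg_nonneg fun j => finVar_nonneg hp (f j)
  have hvB : v ≤ B ^ 2 := runningAvg_le hk fun j _ _ => finVar_le_sq hp (hf j)
  have hyK : r * v ≤ (2 * B * r * K) ^ 2 * L := by
    calc r * v ≤ 1 * B ^ 2 := mul_le_mul (lr_le_one hk) hvB hv0 zero_le_one
      _ ≤ (r * K) ^ 2 * B ^ 2 := by gcongr; exact one_le_pow₀ hrK
      _ ≤ (2 * B * r * K) ^ 2 * 1 := by nlinarith [sq_nonneg (r * K * B)]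
      _ ≤ (2 * B * r * K) ^ 2 * L := by gcongr
  calc runningAvg m vis (fun j => f j (ξ j) - p ⬝ᵥ f j) k
      ≤ 2 * √(L * (r * v)) + 2 * B * r * L :=
        le_two_mul_sqrt_add_of_grid (by positivity) (by linarith) (mul_nonneg hr.le hv0) hyK tail
    _ = 2 * √(r * L * v) + 2 * B * (r * L) := by ring_nf

end BernsteinBound

section VisitSampling

variable {Ω S : Type*} {m0 : MeasurableSpace Ω} {μ : Measure Ω} {𝓖 : Filtration ℕ m0} {m K : ℕ}
  [Fintype S] [DecidableEq S] [MeasurableSpace S] {vis : Ω → ℕ → Prop} {p : S → ℝ}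
  {ξ : Ω → ℕ → S} {f : Ω → ℕ → S → ℝ} {B L : ℝ} {j : ℕ}

/-- At each time `j ∈ {1, …, K}` it is decided, given `𝓖 j`, whether `j` is a visit; at the visits
the sample `ξ j`, revealed by `𝓖 (j + 1)`, is drawn from the fixed distribution `p`. -/
structure IsVisitSampling (μ : Measure Ω) (𝓖 : Filtration ℕ m0) (K : ℕ) (vis : Ω → ℕ → Prop)
    (p : S → ℝ) (ξ : Ω → ℕ → S) : Prop where
  mem_stdSimplex : p ∈ stdSimplex ℝ S
  measurableSet_vis : ∀ j ∈ Icc 1 K, MeasurableSet[𝓖 j] {ω | vis ω j}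
  measurable_sample : ∀ j ∈ Icc 1 K, Measurable[𝓖 (j + 1)] fun ω => ξ ω j
  exists_hasCondDist : ∀ j ∈ Icc 1 K, ∃ q, HasCondDist μ (𝓖 j) (fun ω => ξ ω j) q ∧
    ∀ ω, vis ω j → q ω = p

namespace IsVisitSampling

theorem measurable_visitCount (h : IsVisitSampling μ 𝓖 K vis p ξ) (hj : j ≤ K) :
    Measurable[𝓖 j] fun ω => visitCount (vis ω) j := by
  induction j with
  | zero => simpa only [visitCount_zero] using measurable_const
  | succ j ih =>
    have hcount := (ih (Nat.le_of_succ_le hj)).mono (𝓖.mono j.le_succ) le_rfl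
    have split : (fun ω => visitCount (vis ω) (j + 1)) = fun ω =>
        visitCount (vis ω) j + Set.indicator {ω | vis ω (j + 1)} (fun _ => 1) ω := by
      ext ω
      by_cases hv : vis ω (j + 1)
      · rw [visitCount_succ_of_vis hv, Set.indicator_of_mem (by exact hv)]
      · rw [visitCount_succ_of_not_vis hv, Set.indicator_of_notMem (by exact hv), add_zero]
    rw [split]
    exact hcount.add (measurable_const.indicator
      (h.measurableSet_vis (j + 1) (mem_Icc.2 ⟨Nat.le_add_left 1 j, hj⟩)))

theorem measurable_visitWeight (h : IsVisitSampling μ 𝓖 K vis p ξ) (hj : j ∈ Icc 1 K) (N : ℕ) :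
    Measurable[𝓖 j] fun ω => visitWeight m (vis ω) N j := by
  classical
  exact Measurable.ite (h.measurableSet_vis j hj)
    ((measurable_of_countable fun n => lrProd m n N).comp
      (h.measurable_visitCount (mem_Icc.1 hj).2)) measurable_const

variable [MeasurableSingletonClass S] [IsProbabilityMeasure μ]

theorem measureReal_gridFun_le (h : IsVisitSampling μ 𝓖 K vis p ξ) (hB : 0 < B)
    (hmeas : ∀ j ∈ Icc 1 K, ∀ s, Measurable[𝓖 j] fun ω => f ω j s)
    (hf : ∀ ω j s, |f ω j s| ≤ B) {N : ℕ} (hN : 1 ≤ N) (i : ℕ) (L : ℝ) :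
    μ.real {ω | L ≤ ∑ j ∈ Icc 1 K, (gridFun m (vis ω) (f ω) B N i j (ξ ω j)
        - p ⬝ᵥ gridFun m (vis ω) (f ω) B N i j
        - finVar p (gridFun m (vis ω) (f ω) B N i j))} ≤ Real.exp (-L) := by
  choose! q hq hqp using h.exists_hasCondDist
  have replace_dist (ω : Ω) (j : ℕ) (hj : j ∈ Icc 1 K) :
      gridFun m (vis ω) (f ω) B N i j (ξ ω j) - p ⬝ᵥ gridFun m (vis ω) (f ω) B N i j
          - finVar p (gridFun m (vis ω) (f ω) B N i j)
        = gridFun m (vis ω) (f ω) B N i j (ξ ω j) - q j ω ⬝ᵥ gridFun m (vis ω) (f ω) B N i j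
          - finVar (q j ω) (gridFun m (vis ω) (f ω) B N i j) := by
    by_cases hv : vis ω j
    · rw [hqp j hj ω hv]
    · simp only [gridFun, visitWeight_of_not_vis hv, mul_zero, zero_smul, finVar, Pi.zero_apply,
        dotProduct_zero, ne_eq, OfNat.ofNat_ne_zero, not_false_eq_true, zero_pow]
  simp_rw [sum_congr rfl (replace_dist _)]
  exact measureReal_freedman_le (φ := fun j ω => gridFun m (vis ω) (f ω) B N i j)
    h.measurable_sample hq
    (fun j hj s => ((h.measurable_visitWeight hj N).const_mul _).mul (hmeas j hj s))
    (fun j hj ω s => abs_gridFun_le hB (hf ω) hN (mem_Icc.1 hj).1 i s) L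

theorem measureReal_not_bernsteinBound_le (h : IsVisitSampling μ 𝓖 K vis p ξ) (hB : 0 < B)
    (hmeas : ∀ j ∈ Icc 1 K, ∀ s, Measurable[𝓖 j] fun ω => f ω j s)
    (hf : ∀ ω j s, |f ω j s| ≤ B) (hL : 1 ≤ L) :
    μ.real {ω | ∃ k ∈ Icc 1 K, 1 ≤ visitCount (vis ω) k ∧
        ¬BernsteinBound m (vis ω) p (ξ ω) (f ω) B L k} ≤ K * (K + 1) * Real.exp (-L) := by
  let E (x : ℕ × ℕ) : Set Ω := {ω | L ≤ ∑ j ∈ Icc 1 K,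
    (gridFun m (vis ω) (f ω) B x.1 x.2 j (ξ ω j) - p ⬝ᵥ gridFun m (vis ω) (f ω) B x.1 x.2 j
      - finVar p (gridFun m (vis ω) (f ω) B x.1 x.2 j))}
  have cover : {ω | ∃ k ∈ Icc 1 K, 1 ≤ visitCount (vis ω) k ∧
      ¬BernsteinBound m (vis ω) p (ξ ω) (f ω) B L k} ⊆ ⋃ x ∈ Icc 1 K ×ˢ range (K + 1), E x := by
    rintro ω ⟨k, hk, hcount, hfail⟩
    by_contra hgrid
    simp only [Set.mem_iUnion, not_exists, mem_product] at hgrid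
    have hkK := (mem_Icc.1 hk).2
    exact hfail (bernsteinBound_of_grid h.mem_stdSimplex hB (hf ω) hL hkK hcount fun i hi =>
      not_le.1 (hgrid (visitCount (vis ω) k, i)
        ⟨mem_Icc.2 ⟨hcount, (visitCount_le _ _).trans hkK⟩, hi⟩))
  calc _ ≤ μ.real (⋃ x ∈ Icc 1 K ×ˢ range (K + 1), E x) :=
      measureReal_mono cover (measure_ne_top _ _)
    _ ≤ ∑ x ∈ Icc 1 K ×ˢ range (K + 1), μ.real (E x) := measureReal_biUnion_finset_le _ _
    _ ≤ #(Icc 1 K ×ˢ range (K + 1)) • Real.exp (-L) :=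
      sum_le_card_nsmul _ _ _ fun x hx => h.measureReal_gridFun_le hB hmeas hf
        (mem_Icc.1 (mem_product.1 hx).1).1 x.2 L
    _ = K * (K + 1) * Real.exp (-L) := by
      rw [card_product, Nat.card_Icc, Nat.add_sub_cancel, card_range, nsmul_eq_mul]
      push_cast
      ring

end IsVisitSampling

end VisitSampling

/-! ## Sampling bounds and their deterministic consequences -/

theorem two_mul_sqrt_mul_add_le {x v w B : ℝ} (hx : 0 ≤ x) (hx1 : x ≤ 1) (hB : 0 ≤ B) (hv : 0 ≤ v)
    (hw : w ≤ v + 12 * B ^ 2 * √x) :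
    2 * √(x * w) + 2 * B * x ≤ 2 * √(x * v) + 9 * B * x ^ (3 / 4 : ℝ) := by
  obtain ⟨t, ht, rfl⟩ : ∃ t, 0 ≤ t ∧ t ^ 4 = x :=
    ⟨x ^ (1 / 4 : ℝ), Real.rpow_nonneg hx _, by rw [← Real.rpow_mul_natCast hx]; norm_num⟩
  have ht1 : t ≤ 1 := (pow_le_one_iff_of_nonneg ht four_ne_zero).1 hx1
  have rpow_eq : (t ^ 4) ^ (3 / 4 : ℝ) = t ^ 3 := by
    rw [← Real.rpow_natCast_mul ht, ← Real.rpow_natCast]; norm_num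
  rw [show √(t ^ 4) = t ^ 2 by rw [show t ^ 4 = (t ^ 2) ^ 2 by ring, Real.sqrt_sq (sq_nonneg t)]]
    at hw
  have sqrt_le : √(t ^ 4 * w) ≤ √(t ^ 4 * v) + 7 / 2 * (B * t ^ 3) := by
    refine (Real.sqrt_le_left (by positivity)).2 ?_
    nlinarith [Real.sq_sqrt (show 0 ≤ t ^ 4 * v by positivity),
      mul_nonneg (Real.sqrt_nonneg (t ^ 4 * v)) (show 0 ≤ B * t ^ 3 by positivity),
      mul_le_mul_of_nonneg_left hw (show 0 ≤ t ^ 4 by positivity), sq_nonneg (B * t ^ 3)]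
  have pow_le : B * t ^ 4 ≤ B * t ^ 3 :=
    mul_le_mul_of_nonneg_left (pow_le_pow_of_le_one ht ht1 (by norm_num)) hB
  rw [rpow_eq]
  linarith

section SamplingBounds

variable {S : Type*} [Fintype S] {m : ℕ} {vis : ℕ → Prop} {p : S → ℝ} {ξ : ℕ → S}
  {f : ℕ → S → ℝ} {B L : ℝ} {k : ℕ}

/-- The concentration events of the analysis for the samples `f j (ξ j)`: Bernstein's inequality
from both sides, and for their squares from below. -/
structure SamplingBounds (m : ℕ) (vis : ℕ → Prop) (p : S → ℝ) (ξ : ℕ → S) (f : ℕ → S → ℝ)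
    (B L : ℝ) (k : ℕ) : Prop where
  upper : BernsteinBound m vis p ξ f B L k
  lower : BernsteinBound m vis p ξ (fun j => -f j) B L k
  lower_sq : BernsteinBound m vis p ξ (fun j => -f j ^ 2) (B ^ 2) L k

namespace SamplingBounds

theorem avg_finVar_le (h : SamplingBounds m vis p ξ f B L k) (hp : p ∈ stdSimplex ℝ S)
    (hf : ∀ j s, |f j s| ≤ B) (hL : 0 ≤ L) (hk : 1 ≤ visitCount vis k) :
    runningAvg m vis (fun j => finVar p (f j)) k
      ≤ runningVar m vis (fun j => f j (ξ j)) k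
        + 12 * B ^ 2 * √(lr m (visitCount vis k) * L) := by
  have upper := h.upper.le_sqrt hp hf hL hk
  have lower := h.lower.le_sqrt hp (fun j s => by rw [Pi.neg_apply, abs_neg]; exact hf j s) hL hk
  have lower_sq := h.lower_sq.le_sqrt hp (fun j s => by
    rw [Pi.neg_apply, abs_neg, Pi.pow_apply, abs_pow]
    exact pow_le_pow_left₀ (abs_nonneg _) (hf j s) 2) hL hk
  simp only [dotProduct_neg, Pi.neg_apply, Pi.pow_apply, neg_sub_neg, runningAvg_sub]
    at upper lower lower_sq
  have jensen := sq_runningAvg_le m vis (fun j => p ⬝ᵥ f j) k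
  have mean_le (y : ℕ → ℝ) (hy : ∀ j, |y j| ≤ B) : |runningAvg m vis y k| ≤ B :=
    abs_le.2 ⟨le_runningAvg hk fun j _ _ => (abs_le.1 (hy j)).1,
      runningAvg_le hk fun j _ _ => (abs_le.1 (hy j)).2⟩
  have mean_dist := abs_le.1 (mean_le _ fun j => abs_dotProduct_le_of_mem_stdSimplex hp (hf j))
  have mean_sample := abs_le.1 (mean_le _ fun j => hf j (ξ j))
  simp only [finVar, runningAvg_sub, runningVar]
  set u := √(lr m (visitCount vis k) * L)
  set a := runningAvg m vis (fun j => f j (ξ j)) k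
  set b := runningAvg m vis (fun j => p ⬝ᵥ f j) k
  have sq_sub : a ^ 2 - b ^ 2 ≤ 8 * B ^ 2 * u := by
    calc a ^ 2 - b ^ 2 ≤ |a - b| * |a + b| := by
          rw [← abs_mul, show a ^ 2 - b ^ 2 = (a - b) * (a + b) by ring]
          exact le_abs_self _
      _ ≤ (4 * B * u) * (2 * B) :=
          mul_le_mul (abs_le.2 ⟨by linarith, by linarith⟩)
            (abs_le.2 ⟨by linarith, by linarith⟩) (abs_nonneg _) (by linarith)
      _ = 8 * B ^ 2 * u := by ring
  linarith

theorem avg_le (h : SamplingBounds m vis p ξ f B L k) (hp : p ∈ stdSimplex ℝ S)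
    (hf : ∀ j s, |f j s| ≤ B) (hL : 0 ≤ L) (hk : 1 ≤ visitCount vis k) :
    runningAvg m vis (fun j => p ⬝ᵥ f j - f j (ξ j)) k
      ≤ 2 * √(lr m (visitCount vis k) * L * runningVar m vis (fun j => f j (ξ j)) k)
        + 9 * B * (lr m (visitCount vis k) * L) ^ (3 / 4 : ℝ) := by
  have bernstein := h.lower
  have var_le := h.avg_finVar_le hp hf hL hk
  have hvar : 0 ≤ runningVar m vis (fun j => f j (ξ j)) k := runningVar_nonneg _ _ _ _
  have hB : 0 ≤ B := (abs_nonneg _).trans (hf 0 (ξ 0))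
  have hx : 0 ≤ lr m (visitCount vis k) * L := mul_nonneg (lr_nonneg _ _) hL
  simp only [BernsteinBound, finVar_neg, dotProduct_neg, Pi.neg_apply, neg_sub_neg] at bernstein
  rcases le_total (lr m (visitCount vis k) * L) 1 with hle | hge
  · exact bernstein.trans (two_mul_sqrt_mul_add_le hx hle hB hvar var_le)
  · calc runningAvg m vis (fun j => p ⬝ᵥ f j - f j (ξ j)) k ≤ 2 * B :=
          runningAvg_le hk fun j _ _ => by
            linarith [(abs_le.1 (hf j (ξ j))).1,
              (abs_le.1 (abs_dotProduct_le_of_mem_stdSimplex hp (hf j))).2]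
      _ ≤ 9 * (B * (lr m (visitCount vis k) * L) ^ (3 / 4 : ℝ)) := by
          linarith [le_mul_of_one_le_right hB
            (Real.one_le_rpow hge (by norm_num : 0 ≤ (3 / 4 : ℝ)))]
      _ ≤ _ := by
          rw [← mul_assoc]
          exact le_add_of_nonneg_left (by positivity)

end SamplingBounds

theorem IsVisitSampling.measureReal_not_samplingBounds_le {Ω : Type*} {m0 : MeasurableSpace Ω}
    {μ : Measure Ω} [IsProbabilityMeasure μ] {𝓖 : Filtration ℕ m0} {K : ℕ} [DecidableEq S]
    [MeasurableSpace S] [MeasurableSingletonClass S] {vis : Ω → ℕ → Prop} {ξ : Ω → ℕ → S}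
    {f : Ω → ℕ → S → ℝ} (h : IsVisitSampling μ 𝓖 K vis p ξ) (hB : 0 < B)
    (hmeas : ∀ j ∈ Icc 1 K, ∀ s, Measurable[𝓖 j] fun ω => f ω j s)
    (hf : ∀ ω j s, |f ω j s| ≤ B) (hL : 1 ≤ L) :
    μ.real {ω | ∃ k ∈ Icc 1 K, 1 ≤ visitCount (vis ω) k ∧
        ¬SamplingBounds m (vis ω) p (ξ ω) (f ω) B L k} ≤ 3 * (K * (K + 1) * Real.exp (-L)) := by
  let fails (g : Ω → ℕ → S → ℝ) (C : ℝ) : Set Ω := {ω | ∃ k ∈ Icc 1 K,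
    1 ≤ visitCount (vis ω) k ∧ ¬BernsteinBound m (vis ω) p (ξ ω) (g ω) C L k}
  have upper := h.measureReal_not_bernsteinBound_le (m := m) hB hmeas hf hL
  have lower := h.measureReal_not_bernsteinBound_le (m := m) (f := fun ω j => -f ω j) hB
    (fun j hj s => (hmeas j hj s).neg)
    (fun ω j s => by rw [Pi.neg_apply, abs_neg]; exact hf ω j s) hL
  have lower_sq := h.measureReal_not_bernsteinBound_le (m := m) (f := fun ω j => -f ω j ^ 2)
    (pow_pos hB 2) (fun j hj s => ((hmeas j hj s).pow_const 2).neg)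
    (fun ω j s => by
      rw [Pi.neg_apply, abs_neg, Pi.pow_apply, abs_pow]
      exact pow_le_pow_left₀ (abs_nonneg _) (hf ω j s) 2) hL
  have cover : {ω | ∃ k ∈ Icc 1 K, 1 ≤ visitCount (vis ω) k ∧
      ¬SamplingBounds m (vis ω) p (ξ ω) (f ω) B L k} ⊆
      fails f B ∪ (fails (fun ω j => -f ω j) B ∪ fails (fun ω j => -f ω j ^ 2) (B ^ 2)) := by
    rintro ω ⟨k, hk, hcount, hfail⟩
    by_contra hmem
    simp only [fails, Set.mem_union, Set.mem_ofPred_eq, not_or, not_exists, not_and,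
      not_not] at hmem
    exact hfail ⟨hmem.1 k hk hcount, hmem.2.1 k hk hcount, hmem.2.2 k hk hcount⟩
  have union_le := measureReal_mono (μ := μ) cover (measure_ne_top _ _)
  have split := measureReal_union_le (μ := μ) (fails f B)
    (fails (fun ω j => -f ω j) B ∪ fails (fun ω j => -f ω j ^ 2) (B ^ 2))
  have split' := measureReal_union_le (μ := μ) (fails (fun ω j => -f ω j) B)
    (fails (fun ω j => -f ω j ^ 2) (B ^ 2))
  linarith

end SamplingBounds

/-! ## The optimal value functions -/

namespace MDP

variable {S A : Type} [Fintype S] [Fintype A]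

theorem P_mem_stdSimplex (M : MDP S A) (h : ℕ) (s : S) (a : A) : M.P h s a ∈ stdSimplex ℝ S :=
  ⟨M.P_nonneg h s a, M.P_sum_one h s a⟩

theorem one_le_H (M : MDP S A) : (1 : ℝ) ≤ M.H :=
  Nat.one_le_cast.2 M.H_pos

variable [Nonempty A]

theorem QstarAux_mem_Icc (M : MDP S A) (n h : ℕ) (s : S) (a : A) :
    M.QstarAux n h s a ∈ Set.Icc 0 (n : ℝ) := by
  induction n generalizing h s a with
  | zero => simp only [QstarAux, Nat.cast_zero, Set.Icc_self, Set.mem_singleton_iff]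
  | succ n ih =>
    have nonneg (t : S) : 0 ≤ univ.sup' univ_nonempty fun a' => M.QstarAux n (h + 1) t a' :=
      le_sup'_of_le _ (mem_univ (Classical.arbitrary A)) (ih (h + 1) t _).1
    have mean_nonneg := le_dotProduct_of_mem_stdSimplex (M.P_mem_stdSimplex h s a) nonneg
    have mean_le := dotProduct_le_of_mem_stdSimplex (M.P_mem_stdSimplex h s a) fun t =>
      sup'_le univ_nonempty (fun a' => M.QstarAux n (h + 1) t a') fun a' _ => (ih (h + 1) t a').2
    rw [dotProduct] at mean_nonneg mean_le
    rw [QstarAux, Nat.cast_succ, Set.mem_Icc]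
    constructor <;> linarith [M.r_nonneg h s a, M.r_le_one h s a]

theorem Qstar_nonneg (M : MDP S A) (h : ℕ) (s : S) (a : A) : 0 ≤ M.Qstar h s a :=
  (M.QstarAux_mem_Icc _ h s a).1

theorem Qstar_le (M : MDP S A) {h : ℕ} (hh : 1 ≤ h) (s : S) (a : A) : M.Qstar h s a ≤ M.H :=
  (M.QstarAux_mem_Icc _ h s a).2.trans (Nat.cast_le.2 (by omega))

theorem Vstar_nonneg (M : MDP S A) (h : ℕ) (s : S) : 0 ≤ M.Vstar h s :=
  le_sup'_of_le _ (mem_univ (Classical.arbitrary A)) (M.Qstar_nonneg h s _)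

theorem Vstar_le (M : MDP S A) {h : ℕ} (hh : 1 ≤ h) (s : S) : M.Vstar h s ≤ M.H :=
  sup'_le _ _ fun a _ => M.Qstar_le hh s a

theorem Vstar_terminal (M : MDP S A) (s : S) : M.Vstar (M.H + 1) s = 0 := by
  simp only [Vstar, Qstar, Nat.sub_self, QstarAux, sup'_const]

theorem Qstar_eq (M : MDP S A) {h : ℕ} (hh : h ∈ Icc 1 M.H) (s : S) (a : A) :
    M.Qstar h s a = M.r h s a + M.P h s a ⬝ᵥ M.Vstar (h + 1) := by
  obtain ⟨n, hn⟩ : ∃ n, M.H + 1 - h = n + 1 := ⟨M.H - h, by have := mem_Icc.1 hh; omega⟩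
  simp only [Vstar, Qstar, dotProduct]
  rw [hn, show M.H + 1 - (h + 1) = n by omega, QstarAux]

end MDP

/-! ## The iterates of the algorithm -/

theorem mem_Icc_or_eq_succ {H h : ℕ} (hh : h ∈ Icc 1 (H + 1)) :
    h ∈ Icc 1 H ∨ h = H + 1 := by
  simp only [mem_Icc] at *
  omega

theorem succ_mem_Icc {H h : ℕ} (hh : h ∈ Icc 1 H) : h + 1 ∈ Icc 1 (H + 1) := by
  simp only [mem_Icc] at *
  omega

namespace QLAlg

variable {S A : Type} [Fintype S] [Fintype A] [Nonempty S] [Nonempty A]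
  [DecidableEq S] [DecidableEq A] {M : MDP S A} {K : ℕ} {cb δ : ℝ} {h i j k : ℕ} {s : S} {a : A}

/-- The pair `(s, a)` is visited at step `h` of episode `k`. -/
def IsVisit (x : QLAlg M K cb δ) (h : ℕ) (s : S) (a : A) (k : ℕ) : Prop :=
  s = x.st k h ∧ a = x.ac k h

theorem visitCount_isVisit (x : QLAlg M K cb δ) (hh : h ∈ Icc 1 M.H) (s : S) (a : A) (hk : k ≤ K) :
    visitCount (x.IsVisit h s a) k = x.N k h s a := by
  induction k with
  | zero => rw [x.N_init, visitCount_zero]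
  | succ k ih =>
    rw [x.N_upd (k + 1) (mem_Icc.2 ⟨Nat.le_add_left 1 k, hk⟩) h hh s a, Nat.add_sub_cancel,
      ← ih (Nat.le_of_succ_le hk)]
    split_ifs with hv
    · exact visitCount_succ_of_vis hv
    · exact visitCount_succ_of_not_vis hv

theorem eq_runningAvg_isVisit (x : QLAlg M K cb δ) (hh : h ∈ Icc 1 M.H) {m : ℕ} {X y : ℕ → ℝ}
    (hX : ∀ k ∈ Icc 1 K, X (k + 1) = if s = x.st k h ∧ a = x.ac k h then
      (1 - lr m (x.N k h s a)) * X k + lr m (x.N k h s a) * y k else X k) (hk : k ≤ K)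
    (hinit : X 1 = 0 ∨ 1 ≤ visitCount (x.IsVisit h s a) k) :
    X (k + 1) = runningAvg m (x.IsVisit h s a) y k := by
  have mem {j : ℕ} (hj : j < k) : j + 1 ∈ Icc 1 K := mem_Icc.2 ⟨Nat.le_add_left 1 j, by omega⟩
  refine eq_runningAvg (x := fun k => X (k + 1)) (fun j hj hv => ?_) (fun j hj hv => ?_) hinit
  · rw [x.visitCount_isVisit hh s a (mem_Icc.1 (mem hj)).2, hX _ (mem hj),
      if_pos (show s = _ ∧ a = _ from hv)]
  · rw [hX _ (mem hj), if_neg (show ¬(s = _ ∧ a = _) from hv)]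

theorem Q_succ_le (x : QLAlg M K cb δ) (hh : h ∈ Icc 1 M.H) (hk : k ∈ Icc 1 K) (s : S) (a : A) :
    x.Q (k + 1) h s a ≤ x.Q k h s a := by
  rw [x.Q_upd k hk h hh]
  split_ifs
  · exact (min_le_right _ _).trans (min_le_right _ _)
  · exact le_rfl

theorem V_eq_sup' (x : QLAlg M K cb δ) (hh : h ∈ Icc 1 M.H) (s : S) (hk : k ∈ Icc 1 (K + 1)) :
    x.V k h s = univ.sup' univ_nonempty (x.Q k h s) := by
  obtain ⟨hk1, hkK⟩ := mem_Icc.1 hk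
  induction k, hk1 using Nat.le_induction with
  | base => rw [x.V_init h hh, sup'_congr _ rfl fun a _ => x.Q_init h hh s a, sup'_const]
  | succ k hk1 ih =>
    have hkK' : k ∈ Icc 1 K := mem_Icc.2 ⟨hk1, Nat.succ_le_succ_iff.1 hkK⟩
    rw [x.V_upd k hkK' h hh]
    split_ifs with hs
    · rfl
    · rw [ih (mem_Icc.2 ⟨hk1, by omega⟩) (by omega)]
      exact sup'_congr _ rfl fun a _ => by rw [x.Q_upd k hkK' h hh, if_neg fun hv => hs hv.1]

theorem V_succ_le (x : QLAlg M K cb δ) (hh : h ∈ Icc 1 M.H) (hk : k ∈ Icc 1 K) (s : S) :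
    x.V (k + 1) h s ≤ x.V k h s := by
  obtain ⟨hk1, hkK⟩ := mem_Icc.1 hk
  rw [x.V_eq_sup' hh s (mem_Icc.2 ⟨by omega, by omega⟩),
    x.V_eq_sup' hh s (mem_Icc.2 ⟨hk1, by omega⟩)]
  exact sup'_mono_fun fun a _ => x.Q_succ_le hh hk s a

theorem VR_succ (x : QLAlg M K cb δ) (hh : h ∈ Icc 1 M.H) (hk : k ∈ Icc 1 K) (s : S)
    [Decidable (1 < x.V (k + 1) h s - x.VLCB (k + 1) h s ∨ x.uref k h s)] :
    x.VR (k + 1) h s =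
      if s = x.st k h ∧ (1 < x.V (k + 1) h s - x.VLCB (k + 1) h s ∨ x.uref k h s) then
        x.V (k + 1) h s
      else x.VR k h s := by
  split_ifs with hupd
  · obtain ⟨rfl, hupd⟩ := hupd
    exact x.VR_upd_pos k hk h hh hupd
  · by_cases hs : s = x.st k h
    · subst hs
      exact x.VR_upd_neg k hk h hh fun hu => hupd ⟨rfl, hu⟩
    · exact x.VR_upd_other k hk h hh s hs

theorem V_le_VR_of_mem (x : QLAlg M K cb δ) (hh : h ∈ Icc 1 M.H) (hk : k ∈ Icc 1 (K + 1)) (s : S) :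
    x.V k h s ≤ x.VR k h s := by
  classical
  obtain ⟨hk1, hkK⟩ := mem_Icc.1 hk
  induction k, hk1 using Nat.le_induction with
  | base => rw [x.V_init h hh, x.VR_init h hh]
  | succ k hk1 ih =>
    have hkK' : k ∈ Icc 1 K := mem_Icc.2 ⟨hk1, Nat.succ_le_succ_iff.1 hkK⟩
    rw [x.VR_succ hh hkK']
    split_ifs
    · exact le_rfl
    · exact (x.V_succ_le hh hkK' s).trans (ih (mem_Icc.2 ⟨hk1, by omega⟩) (by omega))

theorem VR_succ_le (x : QLAlg M K cb δ) (hh : h ∈ Icc 1 M.H) (hk : k ∈ Icc 1 K) (s : S) :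
    x.VR (k + 1) h s ≤ x.VR k h s := by
  classical
  obtain ⟨hk1, hkK⟩ := mem_Icc.1 hk
  rw [x.VR_succ hh hk]
  split_ifs
  · exact (x.V_succ_le hh hk s).trans (x.V_le_VR_of_mem hh (mem_Icc.2 ⟨hk1, by omega⟩) s)
  · exact le_rfl

theorem V_le_VR (x : QLAlg M K cb δ) (hh : h ∈ Icc 1 (M.H + 1)) (hk : k ∈ Icc 1 (K + 1)) (s : S) :
    x.V k h s ≤ x.VR k h s := by
  rcases mem_Icc_or_eq_succ hh with hh | rfl
  · exact x.V_le_VR_of_mem hh hk s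
  · rw [(x.V_terminal k s).1, (x.V_terminal k s).2.1]

theorem VR_anti (x : QLAlg M K cb δ) (hh : h ∈ Icc 1 (M.H + 1)) (hi : 1 ≤ i) (hij : i ≤ j)
    (hj : j ≤ K + 1) (s : S) : x.VR j h s ≤ x.VR i h s := by
  rcases mem_Icc_or_eq_succ hh with hh | rfl
  · induction j, hij using Nat.le_induction with
    | base => exact le_rfl
    | succ j hij ih =>
      exact (x.VR_succ_le hh (mem_Icc.2 ⟨hi.trans hij, by omega⟩) s).trans (ih (by omega))
  · rw [(x.V_terminal j s).2.1, (x.V_terminal i s).2.1]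

theorem VR_le_H (x : QLAlg M K cb δ) (hh : h ∈ Icc 1 (M.H + 1)) (hk : k ∈ Icc 1 (K + 1)) (s : S) :
    x.VR k h s ≤ M.H := by
  refine (x.VR_anti hh le_rfl (mem_Icc.1 hk).1 (mem_Icc.1 hk).2 s).trans ?_
  rcases mem_Icc_or_eq_succ hh with hh | rfl
  · rw [x.VR_init h hh]
  · rw [(x.V_terminal 1 s).2.1]
    exact Nat.cast_nonneg _

end QLAlg

/-! ## Optimism on the concentration event -/

theorem mul_sqrt_le_mul_sqrt {a b y z : ℝ} (ha : 0 ≤ a) (hb : 0 ≤ b)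
    (h : a ^ 2 * y ≤ b ^ 2 * z) : a * √y ≤ b * √z := by
  simpa only [Real.sqrt_mul (sq_nonneg _), Real.sqrt_sq ha, Real.sqrt_sq hb] using
    Real.sqrt_le_sqrt h

theorem four_mul_sqrt_lr_mul_le {m n : ℕ} (hm : 1 ≤ m) (hn : 1 ≤ n) {ι : ℝ} (hι : 0 ≤ ι) :
    4 * m * √(lr m n * (6 * ι)) ≤ 14 * √(m ^ 3 * ι / n) := by
  have hm' : (1 : ℝ) ≤ m := by exact_mod_cast hm
  have hn' : (0 : ℝ) < n := by exact_mod_cast hn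
  refine mul_sqrt_le_mul_sqrt (by positivity) (by positivity) ?_
  calc (4 * m : ℝ) ^ 2 * (lr m n * (6 * ι)) = 96 * m ^ 2 * ι * lr m n := by ring
    _ ≤ 96 * m ^ 2 * ι * (2 * m / n) := by
        gcongr
        exact (le_div_iff₀ hn').2 ((lr_mul_le m n).trans (by linarith))
    _ = 192 * (m ^ 3 * ι / n) := by ring
    _ ≤ 14 ^ 2 * (m ^ 3 * ι / n) := by
        gcongr
        norm_num

theorem rpow_three_quarters_le {y : ℝ} (hy : 1 / 4 ≤ y) : (12 * y) ^ (3 / 4 : ℝ) ≤ 10 * y := by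
  have hy0 : 0 ≤ y := by linarith
  calc (12 * y) ^ (3 / 4 : ℝ) = ((12 * y) ^ 3) ^ (1 / 4 : ℝ) := by
        rw [← Real.rpow_natCast_mul (by positivity)]; norm_num
    _ ≤ ((10 * y) ^ 4) ^ (1 / 4 : ℝ) := by
        refine Real.rpow_le_rpow (by positivity) ?_ (by norm_num)
        nlinarith [pow_nonneg hy0 3, mul_le_mul_of_nonneg_left hy (pow_nonneg hy0 3)]
    _ = 10 * y := by
        rw [← Real.rpow_natCast_mul (by positivity)]; norm_num

theorem SamplingBounds.avg_le_bonus {S : Type*} [Fintype S] {m k : ℕ} {vis : ℕ → Prop}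
    {p : S → ℝ} {ξ : ℕ → S} {f : ℕ → S → ℝ} {B ι : ℝ}
    (h : SamplingBounds m vis p ξ f B (6 * ι) k) (hp : p ∈ stdSimplex ℝ S)
    (hf : ∀ j s, |f j s| ≤ B) (hι : 1 / 4 ≤ ι) (hB : 1 ≤ B) (hm : m + 1 ≤ 2 * B)
    (hk : 1 ≤ visitCount vis k) :
    runningAvg m vis (fun j => p ⬝ᵥ f j - f j (ξ j)) k
      ≤ 5 * √((m + 1) * (ι / visitCount vis k) * runningVar m vis (fun j => f j (ξ j)) k)
        + 90 * (B ^ 2 * ι / (visitCount vis k : ℝ) ^ (3 / 4 : ℝ)) := by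
  have avg_le := h.avg_le hp hf (by positivity) hk
  have var_nonneg := runningVar_nonneg m vis (fun j => f j (ξ j)) k
  have hN : (0 : ℝ) < visitCount vis k := by exact_mod_cast hk
  have rate_le := (le_div_iff₀ hN).2 (lr_mul_le m (visitCount vis k))
  have rate_nonneg := lr_nonneg m (visitCount vis k)
  set n : ℝ := ((visitCount vis k : ℕ) : ℝ)
  set r := lr m (visitCount vis k)
  set v := runningVar m vis (fun j => f j (ξ j)) k
  have sqrt_le : 2 * √(r * (6 * ι) * v) ≤ 5 * √((m + 1) * (ι / n) * v) := by
    refine mul_sqrt_le_mul_sqrt (by positivity) (by positivity) ?_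
    rw [show (m + 1 : ℝ) * (ι / n) * v = (m + 1) / n * (ι * v) by ring]
    nlinarith [mul_le_mul_of_nonneg_right rate_le (show 0 ≤ ι * v by positivity),
      show 0 ≤ (m + 1 : ℝ) / n * (ι * v) by positivity]
  have rpow_le : (r * (6 * ι)) ^ (3 / 4 : ℝ) ≤ 10 * (B * ι) / n ^ (3 / 4 : ℝ) := by
    calc (r * (6 * ι)) ^ (3 / 4 : ℝ) ≤ (12 * (B * ι) / n) ^ (3 / 4 : ℝ) := by
          refine Real.rpow_le_rpow (by positivity) ?_ (by norm_num)
          calc r * (6 * ι) ≤ 2 * B / n * (6 * ι) := by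
                gcongr
                exact rate_le.trans (by gcongr)
            _ = 12 * (B * ι) / n := by ring
      _ ≤ 10 * (B * ι) / n ^ (3 / 4 : ℝ) := by
          rw [Real.div_rpow (by positivity) hN.le]
          gcongr
          exact rpow_three_quarters_le (by nlinarith)
  calc _ ≤ _ := avg_le
    _ ≤ 5 * √((m + 1) * (ι / n) * v) + 9 * B * (10 * (B * ι) / n ^ (3 / 4 : ℝ)) := by gcongr
    _ = _ := by ring

/-- The truncation of `z` to the interval `[0, b]`. -/
noncomputable def truncate (b z : ℝ) : ℝ :=
  max 0 (min z b)

theorem truncate_mem_Icc {b : ℝ} (hb : 0 ≤ b) (z : ℝ) : truncate b z ∈ Set.Icc 0 b :=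
  ⟨le_max_left _ _, max_le hb (min_le_right _ _)⟩

theorem truncate_of_mem_Icc {b z : ℝ} (hz : z ∈ Set.Icc 0 b) : truncate b z = z := by
  rw [truncate, min_eq_left hz.2, max_eq_right hz.1]

namespace QLAlg

variable {S A : Type} [Fintype S] [Fintype A] [Nonempty S] [Nonempty A]
  [DecidableEq S] [DecidableEq A] {M : MDP S A} {K : ℕ} {cb δ : ℝ} {h j k : ℕ} {s : S} {a : A}

theorem visitCount_isVisit_pos {x : QLAlg M K cb δ} (hk : k ∈ Icc 1 K) (hv : x.IsVisit h s a k) :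
    1 ≤ visitCount (x.IsVisit h s a) k :=
  visitCount_pos_of_vis hv (mem_Icc.1 hk).1

/-- The reference value `V^R_{h+1}` in episode `j`. It is truncated to `[0, H]`, which changes
nothing where optimism holds, to be bounded at every outcome. -/
noncomputable def refSample (x : QLAlg M K cb δ) (h j : ℕ) (s : S) : ℝ :=
  truncate M.H (x.VR j (h + 1) s)

/-- The advantage `V_{h+1} - V^R_{h+1}` in episode `j`, with both terms truncated to `[0, H]`. -/
noncomputable def advSample (x : QLAlg M K cb δ) (h j : ℕ) (s : S) : ℝ :=
  truncate M.H (x.V j (h + 1) s) - x.refSample h j s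

theorem abs_refSample_le (x : QLAlg M K cb δ) (h j : ℕ) (s : S) : |x.refSample h j s| ≤ M.H := by
  have mem := truncate_mem_Icc M.H.cast_nonneg (x.VR j (h + 1) s)
  rw [refSample]
  exact abs_le.2 ⟨by linarith [mem.1, (Nat.cast_nonneg M.H : (0 : ℝ) ≤ _)], mem.2⟩

theorem abs_advSample_le (x : QLAlg M K cb δ) (h j : ℕ) (s : S) : |x.advSample h j s| ≤ M.H := by
  have memR := truncate_mem_Icc M.H.cast_nonneg (x.VR j (h + 1) s)
  have mem := truncate_mem_Icc M.H.cast_nonneg (x.V j (h + 1) s)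
  rw [advSample, refSample]
  exact abs_sub_le_iff.2 ⟨by linarith [mem.2, memR.1], by linarith [mem.1, memR.2]⟩

/-- The sampling bounds with learning rate `lr m` hold for the next states after every visited
pair, for the functions `f h j` at step `h` of episode `j`. -/
def Concentrates (x : QLAlg M K cb δ) (m : ℕ) (f : ℕ → ℕ → S → ℝ) : Prop :=
  ∀ h ∈ Icc 1 M.H, ∀ s a, ∀ k ∈ Icc 1 K, 1 ≤ visitCount (x.IsVisit h s a) k →
    SamplingBounds m (x.IsVisit h s a) (M.P h s a) (fun j => x.st j (h + 1)) (f h)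
      M.H (6 * iota S A K M.H δ) k

/-- The event on which the estimates are shown to be optimistic. -/
structure GoodEvent (x : QLAlg M K cb δ) : Prop where
  opt : x.Concentrates M.H fun h _ => M.Vstar (h + 1)
  ref : x.Concentrates 0 x.refSample
  adv : x.Concentrates M.H x.advSample

/-- The value estimates dominate the optimal values up to episode `k`. -/
def OptimisticUpTo (x : QLAlg M K cb δ) (k : ℕ) : Prop :=
  ∀ j ∈ Icc 1 k, ∀ h ∈ Icc 1 (M.H + 1), ∀ s, M.Vstar h s ≤ x.V j h s

theorem OptimisticUpTo.mono {x : QLAlg M K cb δ} (hV : x.OptimisticUpTo k) (hjk : j ≤ k) :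
    x.OptimisticUpTo j :=
  fun i hi => hV i (Icc_subset_Icc_right hjk hi)

theorem V_mem_Icc {x : QLAlg M K cb δ} (hV : x.OptimisticUpTo k) (hkK : k ≤ K)
    (hh : h ∈ Icc 1 (M.H + 1)) (hj : j ∈ Icc 1 k) (s : S) :
    x.V j h s ∈ Set.Icc 0 (x.VR j h s) ∧ x.VR j h s ∈ Set.Icc 0 (M.H : ℝ) := by
  have hjK : j ∈ Icc 1 (K + 1) := Icc_subset_Icc_right (hkK.trans K.le_succ) hj
  have V_nonneg := (M.Vstar_nonneg h s).trans (hV j hj h hh s)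
  have V_le := x.V_le_VR hh hjK s
  exact ⟨⟨V_nonneg, V_le⟩, V_nonneg.trans V_le, x.VR_le_H hh hjK s⟩

theorem refSample_eq {x : QLAlg M K cb δ} (hV : x.OptimisticUpTo k) (hkK : k ≤ K)
    (hh : h ∈ Icc 1 M.H) (hj : j ∈ Icc 1 k) : x.refSample h j = x.VR j (h + 1) :=
  funext fun s => truncate_of_mem_Icc (V_mem_Icc hV hkK (succ_mem_Icc hh) hj s).2

theorem advSample_eq {x : QLAlg M K cb δ} (hV : x.OptimisticUpTo k) (hkK : k ≤ K)
    (hh : h ∈ Icc 1 M.H) (hj : j ∈ Icc 1 k) :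
    x.advSample h j = x.V j (h + 1) - x.VR j (h + 1) := by
  ext s
  obtain ⟨memV, memR⟩ := V_mem_Icc hV hkK (succ_mem_Icc hh) hj s
  rw [advSample, refSample_eq hV hkK hh hj, truncate_of_mem_Icc ⟨memV.1, memV.2.trans memR.2⟩,
    Pi.sub_apply]

/-- The empirical variance of the reference values at the next states, up to episode `k`. -/
noncomputable def refVar (x : QLAlg M K cb δ) (h : ℕ) (s : S) (a : A) (k : ℕ) : ℝ :=
  runningVar 0 (x.IsVisit h s a) (fun j => x.VR j (h + 1) (x.st j (h + 1))) k

/-- The empirical variance of the advantages at the next states, up to episode `k`, with the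
weights of the learning rate. -/
noncomputable def advVar (x : QLAlg M K cb δ) (h : ℕ) (s : S) (a : A) (k : ℕ) : ℝ :=
  runningVar M.H (x.IsVisit h s a)
    (fun j => x.V j (h + 1) (x.st j (h + 1)) - x.VR j (h + 1) (x.st j (h + 1))) k

/-- The lower-order term of the exploration bonus `b^R`, without the factor `cb`. -/
noncomputable def residualBonus (x : QLAlg M K cb δ) (h : ℕ) (s : S) (a : A) (k : ℕ) : ℝ :=
  M.H ^ 2 * iota S A K M.H δ / (visitCount (x.IsVisit h s a) k : ℝ) ^ (3 / 4 : ℝ)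

theorem muRef_succ (x : QLAlg M K cb δ) (hh : h ∈ Icc 1 M.H) (hk : k ≤ K) (s : S) (a : A) :
    x.muRef (k + 1) h s a
      = runningAvg 0 (x.IsVisit h s a) (fun j => x.VR j (h + 1) (x.st j (h + 1))) k :=
  x.eq_runningAvg_isVisit hh (X := fun k => x.muRef k h s a)
    (fun j hj => by simpa only [lr_zero] using x.muRef_upd j hj h hh s a) hk
    (Or.inl (x.mom_init h s a).1)

theorem sigRef_sub_sq_muRef (x : QLAlg M K cb δ) (hh : h ∈ Icc 1 M.H) (hk : k ≤ K) (s : S)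
    (a : A) : x.sigRef (k + 1) h s a - x.muRef (k + 1) h s a ^ 2 = x.refVar h s a k := by
  rw [x.muRef_succ hh hk, refVar, runningVar]
  congr 1
  exact x.eq_runningAvg_isVisit hh (X := fun k => x.sigRef k h s a)
    (fun j hj => by simpa only [lr_zero] using x.sigRef_upd j hj h hh s a) hk
    (Or.inl (x.mom_init h s a).2.1)

theorem sigAdv_sub_sq_muAdv (x : QLAlg M K cb δ) (hh : h ∈ Icc 1 M.H) (hk : k ≤ K) (s : S)
    (a : A) : x.sigAdv (k + 1) h s a - x.muAdv (k + 1) h s a ^ 2 = x.advVar h s a k := by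
  have hmu := x.eq_runningAvg_isVisit hh (X := fun k => x.muAdv k h s a)
    (fun j hj => x.muAdv_upd j hj h hh s a) hk (Or.inl (x.mom_init h s a).2.2.1)
  have hsig := x.eq_runningAvg_isVisit hh (X := fun k => x.sigAdv k h s a)
    (fun j hj => x.sigAdv_upd j hj h hh s a) hk (Or.inl (x.mom_init h s a).2.2.2.1)
  rw [hmu, hsig, advVar, runningVar]

theorem BR_succ (x : QLAlg M K cb δ) (hh : h ∈ Icc 1 M.H) (hk : k ∈ Icc 1 K)
    (hv : x.IsVisit h s a k) :
    x.BR (k + 1) h s a = cb * √(iota S A K M.H δ / visitCount (x.IsVisit h s a) k) *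
      (√(x.refVar h s a k) + √M.H * √(x.advVar h s a k)) := by
  have hkK := (mem_Icc.1 hk).2
  rw [x.BR_upd k hk h hh, if_pos (show s = _ ∧ a = _ from hv), x.visitCount_isVisit hh s a hkK,
    x.sigRef_sub_sq_muRef hh hkK, x.sigAdv_sub_sq_muAdv hh hkK]

/-- The increments `dR` enter `bR` divided by the learning rate, so that averaging telescopes. -/
theorem runningAvg_bR (x : QLAlg M K cb δ) (hh : h ∈ Icc 1 M.H) (hk : k ≤ K) (s : S) (a : A) :
    runningAvg M.H (x.IsVisit h s a) (fun j => x.bR j h) k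
      = x.BR (k + 1) h s a
        + cb * runningAvg M.H (x.IsVisit h s a) (x.residualBonus h s a) k := by
  rw [← runningAvg_const_mul, ← sub_eq_iff_eq_add, ← runningAvg_sub]
  symm
  refine x.eq_runningAvg_isVisit hh (X := fun k => x.BR k h s a) (fun j hj => ?_) hk
    (Or.inl (x.mom_init h s a).2.2.2.2.1)
  have hjK := (mem_Icc.1 hj).2
  split_ifs with hv
  · have hN := visitCount_isVisit_pos (x := x) hj hv
    have rate_pos : 0 < lr M.H (x.N j h s a) := lr_pos (x.visitCount_isVisit hh s a hjK ▸ hN)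
    have hd := x.dR_upd j hj h hh s a
    rw [if_pos hv] at hd
    rw [x.bR_def j hj h hh, ← hv.1, ← hv.2, hd, residualBonus, x.visitCount_isVisit hh s a hjK]
    field_simp
    ring
  · rw [x.BR_upd j hj h hh, if_neg hv]

theorem residualBonus_anti (x : QLAlg M K cb δ) (hι : 0 ≤ iota S A K M.H δ)
    (hj : j ∈ Icc 1 k) (hv : x.IsVisit h s a j) :
    x.residualBonus h s a k ≤ x.residualBonus h s a j := by
  have hN : (0 : ℝ) < visitCount (x.IsVisit h s a) j :=
    Nat.cast_pos.2 (visitCount_pos_of_vis hv (mem_Icc.1 hj).1)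
  have hmono : (visitCount (x.IsVisit h s a) j : ℝ) ≤ visitCount (x.IsVisit h s a) k :=
    Nat.cast_le.2 (visitCount_mono _ (mem_Icc.1 hj).2)
  unfold residualBonus
  gcongr

/-- The reference values are nonincreasing, so the running mean of `V^R` dominates its current
mean up to the sampling error. -/
theorem dotProduct_VR_sub_muRef_le {x : QLAlg M K cb δ} (G : x.GoodEvent)
    (hι : 1 / 4 ≤ iota S A K M.H δ) (hV : x.OptimisticUpTo k) (hh : h ∈ Icc 1 M.H)
    (hk : k ∈ Icc 1 K) (hv : x.IsVisit h s a k) :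
    M.P h s a ⬝ᵥ x.VR k (h + 1) - x.muRef (k + 1) h s a
      ≤ 5 * √(iota S A K M.H δ) * √(x.refVar h s a k / visitCount (x.IsVisit h s a) k)
        + 90 * x.residualBonus h s a k := by
  have hkK := (mem_Icc.1 hk).2
  have hN := visitCount_isVisit_pos hk hv
  have hp := M.P_mem_stdSimplex h s a
  have sampling := (G.ref h hh s a k hk hN).avg_le_bonus hp (x.abs_refSample_le h) hι M.one_le_H
    (by rw [Nat.cast_zero]; linarith [M.one_le_H]) hN
  have mean_le : M.P h s a ⬝ᵥ x.VR k (h + 1)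
      ≤ runningAvg 0 (x.IsVisit h s a) (fun j => M.P h s a ⬝ᵥ x.refSample h j) k :=
    le_runningAvg hN fun j hj _ => by
      rw [refSample_eq hV hkK hh hj]
      exact dotProduct_mono_of_mem_stdSimplex hp fun t =>
        x.VR_anti (succ_mem_Icc hh) (mem_Icc.1 hj).1 (mem_Icc.1 hj).2 (by omega) t
  have sample_eq : ∀ j ∈ Icc 1 k, x.IsVisit h s a j →
      x.refSample h j (x.st j (h + 1)) = x.VR j (h + 1) (x.st j (h + 1)) := fun j hj _ => by
    rw [refSample_eq hV hkK hh hj]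
  rw [runningAvg_sub, runningAvg_congr sample_eq, runningVar_congr sample_eq,
    ← x.muRef_succ hh hkK, Nat.cast_zero, zero_add, one_mul, ← refVar, ← residualBonus,
    div_mul_eq_mul_div, mul_div_assoc, Real.sqrt_mul (by linarith), ← mul_assoc] at sampling
  linarith

theorem runningAvg_dotProduct_VR_sub_muRef_le {x : QLAlg M K cb δ} (G : x.GoodEvent)
    (hι : 1 / 4 ≤ iota S A K M.H δ) (hV : x.OptimisticUpTo k) (hh : h ∈ Icc 1 M.H)
    (hk : k ∈ Icc 1 K) (s : S) (a : A) :
    runningAvg M.H (x.IsVisit h s a)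
        (fun j => M.P h s a ⬝ᵥ x.VR j (h + 1) - x.muRef (j + 1) h s a) k
      ≤ 10 * (√(iota S A K M.H δ / visitCount (x.IsVisit h s a) k) * √(x.refVar h s a k))
        + 90 * runningAvg M.H (x.IsVisit h s a) (x.residualBonus h s a) k := by
  have hkK := (mem_Icc.1 hk).2
  have pointwise : ∀ j ∈ Icc 1 k, x.IsVisit h s a j → _ := fun j hj hv =>
    dotProduct_VR_sub_muRef_le G hι (hV.mono (mem_Icc.1 hj).2) hh (Icc_subset_Icc_right hkK hj) hv
  have avg_width := runningAvg_sqrt_runningVar_div_le M.H_pos (x.IsVisit h s a)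
    (fun j => x.VR j (h + 1) (x.st j (h + 1))) k
  calc _ ≤ _ := runningAvg_mono pointwise
    _ = 5 * √(iota S A K M.H δ) * runningAvg M.H (x.IsVisit h s a)
          (fun j => √(x.refVar h s a j / visitCount (x.IsVisit h s a) j)) k
        + 90 * runningAvg M.H (x.IsVisit h s a) (x.residualBonus h s a) k := by
      rw [runningAvg_add, runningAvg_const_mul, runningAvg_const_mul]
    _ ≤ 5 * √(iota S A K M.H δ) * (2 * √(x.refVar h s a k / visitCount (x.IsVisit h s a) k))
        + 90 * runningAvg M.H (x.IsVisit h s a) (x.residualBonus h s a) k := by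
      gcongr
      exact avg_width
    _ = _ := by
      rw [Real.sqrt_div' _ (Nat.cast_nonneg _), Real.sqrt_div' _ (Nat.cast_nonneg _)]
      ring

theorem runningAvg_dotProduct_adv_sub_le {x : QLAlg M K cb δ} (G : x.GoodEvent)
    (hι : 1 / 4 ≤ iota S A K M.H δ) (hV : x.OptimisticUpTo k) (hh : h ∈ Icc 1 M.H)
    (hk : k ∈ Icc 1 K) (hv : x.IsVisit h s a k) :
    runningAvg M.H (x.IsVisit h s a) (fun j => M.P h s a ⬝ᵥ (x.V j (h + 1) - x.VR j (h + 1))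
        - (x.V j (h + 1) (x.st j (h + 1)) - x.VR j (h + 1) (x.st j (h + 1)))) k
      ≤ 10 * (√(iota S A K M.H δ / visitCount (x.IsVisit h s a) k)
          * (√M.H * √(x.advVar h s a k))) + 90 * x.residualBonus h s a k := by
  have hkK := (mem_Icc.1 hk).2
  have hN := visitCount_isVisit_pos hk hv
  have sampling := (G.adv h hh s a k hk hN).avg_le_bonus (M.P_mem_stdSimplex h s a)
    (x.abs_advSample_le h) hι M.one_le_H (by linarith [M.one_le_H]) hN
  have dev_eq : ∀ j ∈ Icc 1 k, x.IsVisit h s a j →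
      M.P h s a ⬝ᵥ x.advSample h j - x.advSample h j (x.st j (h + 1)) =
        M.P h s a ⬝ᵥ (x.V j (h + 1) - x.VR j (h + 1))
          - (x.V j (h + 1) (x.st j (h + 1)) - x.VR j (h + 1) (x.st j (h + 1))) :=
    fun j hj _ => by rw [advSample_eq hV hkK hh hj, Pi.sub_apply]
  have sample_eq : ∀ j ∈ Icc 1 k, x.IsVisit h s a j → x.advSample h j (x.st j (h + 1)) =
      x.V j (h + 1) (x.st j (h + 1)) - x.VR j (h + 1) (x.st j (h + 1)) :=
    fun j hj _ => by rw [advSample_eq hV hkK hh hj, Pi.sub_apply]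
  rw [runningAvg_congr dev_eq, runningVar_congr sample_eq, ← residualBonus, ← advVar] at sampling
  have var_nonneg : 0 ≤ x.advVar h s a k := runningVar_nonneg _ _ _ _
  set n : ℝ := ((visitCount (x.IsVisit h s a) k : ℕ) : ℝ)
  have sqrt_le : √((M.H + 1) * (iota S A K M.H δ / n) * x.advVar h s a k)
      ≤ 2 * (√(iota S A K M.H δ / n) * (√M.H * √(x.advVar h s a k))) := by
    rw [← Real.sqrt_mul M.H.cast_nonneg, ← Real.sqrt_mul (by positivity),
      ← one_mul (√((M.H + 1) * _ * _))]
    refine mul_sqrt_le_mul_sqrt zero_le_one zero_le_two ?_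
    have : 0 ≤ iota S A K M.H δ / n * x.advVar h s a k := by positivity
    nlinarith [M.one_le_H]
  linarith

theorem Qstar_le_QR_succ {x : QLAlg M K cb δ} (G : x.GoodEvent)
    (hι : 1 / 4 ≤ iota S A K M.H δ) (hcb : 180 ≤ cb) (hV : x.OptimisticUpTo k)
    (hh : h ∈ Icc 1 M.H) (hk : k ∈ Icc 1 K) (hv : x.IsVisit h s a k) :
    M.Qstar h s a ≤ x.QR (k + 1) h s a := by
  have hkK := (mem_Icc.1 hk).2
  have hN := visitCount_isVisit_pos hk hv
  have decompose : ∀ j ∈ Icc 1 k, x.IsVisit h s a j → M.Qstar h s a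
      - (M.P h s a ⬝ᵥ x.VR j (h + 1) - x.muRef (j + 1) h s a)
      - (M.P h s a ⬝ᵥ (x.V j (h + 1) - x.VR j (h + 1))
          - (x.V j (h + 1) (x.st j (h + 1)) - x.VR j (h + 1) (x.st j (h + 1)))) + x.bR j h
      ≤ M.r h s a + x.V j (h + 1) (x.st j (h + 1)) - x.VR j (h + 1) (x.st j (h + 1))
        + x.muRef (j + 1) h s a + x.bR j h := fun j hj _ => by
    have := dotProduct_mono_of_mem_stdSimplex (M.P_mem_stdSimplex h s a)
      (hV j hj (h + 1) (succ_mem_Icc hh))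
    rw [M.Qstar_eq hh, dotProduct_sub]
    linarith
  have le_QR := runningAvg_mono (m := M.H) decompose
  rw [runningAvg_add, runningAvg_sub, runningAvg_sub, runningAvg_const _ hN,
    x.runningAvg_bR hh hkK, x.BR_succ hh hk hv,
    ← x.eq_runningAvg_isVisit hh (X := fun k => x.QR k h s a)
      (fun j hj => x.QR_upd j hj h hh s a) hkK (Or.inr hN)] at le_QR
  have ref_error := runningAvg_dotProduct_VR_sub_muRef_le G hι hV hh hk s a
  have adv_error := runningAvg_dotProduct_adv_sub_le G hι hV hh hk hv
  have residual_le : x.residualBonus h s a k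
      ≤ runningAvg M.H (x.IsVisit h s a) (x.residualBonus h s a) k :=
    le_runningAvg hN fun j hj => x.residualBonus_anti (by linarith) hj
  have residual_nonneg : 0 ≤ x.residualBonus h s a k := by
    unfold residualBonus
    positivity
  have ref_width_nonneg : 0 ≤ √(iota S A K M.H δ / visitCount (x.IsVisit h s a) k)
    * √(x.refVar h s a k) := by positivity
  have adv_width_nonneg : 0 ≤ √(iota S A K M.H δ / visitCount (x.IsVisit h s a) k)
    * (√M.H * √(x.advVar h s a k)) := by positivity
  nlinarith

theorem Qstar_le_QUCB_succ {x : QLAlg M K cb δ} (G : x.GoodEvent)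
    (hι : 0 ≤ iota S A K M.H δ) (hcb : 14 ≤ cb) (hV : x.OptimisticUpTo k)
    (hh : h ∈ Icc 1 M.H) (hk : k ∈ Icc 1 K) (hv : x.IsVisit h s a k) :
    M.Qstar h s a ≤ x.QUCB (k + 1) h s a := by
  have hkK := (mem_Icc.1 hk).2
  have hN := visitCount_isVisit_pos hk hv
  set ι := iota S A K M.H δ
  have sampling := (G.opt h hh s a k hk hN).lower.le_sqrt (M.P_mem_stdSimplex h s a)
    (fun _ t => by
      rw [Pi.neg_apply, abs_neg, abs_of_nonneg (M.Vstar_nonneg _ t)]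
      exact M.Vstar_le (Nat.le_add_left 1 h) t) (by positivity) hN
  simp only [dotProduct_neg, Pi.neg_apply, neg_sub_neg] at sampling
  have bonus_le : ∀ j ∈ Icc 1 k, x.IsVisit h s a j →
      √(M.H ^ 3 * ι / visitCount (x.IsVisit h s a) k) ≤ √(M.H ^ 3 * ι / x.N j h s a) :=
      fun j hj hvj => by
    rw [← x.visitCount_isVisit hh s a ((mem_Icc.1 hj).2.trans hkK)]
    have hNj : (0 : ℝ) < visitCount (x.IsVisit h s a) j :=
      Nat.cast_pos.2 (visitCount_pos_of_vis hvj (mem_Icc.1 hj).1)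
    gcongr
    exact visitCount_mono _ (mem_Icc.1 hj).2
  have le_QUCB : runningAvg M.H (x.IsVisit h s a)
      (fun j => M.Qstar h s a + cb * √(M.H ^ 3 * ι / visitCount (x.IsVisit h s a) k)
        - (M.P h s a ⬝ᵥ M.Vstar (h + 1) - M.Vstar (h + 1) (x.st j (h + 1)))) k
      ≤ x.QUCB (k + 1) h s a := by
    rw [x.eq_runningAvg_isVisit hh (X := fun k => x.QUCB k h s a)
      (fun j hj => x.QUCB_upd j hj h hh s a) hkK (Or.inr hN)]
    refine runningAvg_mono fun j hj hvj => ?_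
    have := mul_le_mul_of_nonneg_left (bonus_le j hj hvj) (by linarith : 0 ≤ cb)
    rw [M.Qstar_eq hh]
    linarith [hV j hj (h + 1) (succ_mem_Icc hh) (x.st j (h + 1))]
  rw [runningAvg_sub, runningAvg_const _ hN] at le_QUCB
  have width_le := four_mul_sqrt_lr_mul_le M.H_pos hN hι
  nlinarith [Real.sqrt_nonneg (M.H ^ 3 * ι / visitCount (x.IsVisit h s a) k)]

theorem OptimisticUpTo.succ {x : QLAlg M K cb δ} (hV : x.OptimisticUpTo k) (hk : k ≤ K)
    (hQ : ∀ h ∈ Icc 1 M.H, ∀ s a, M.Qstar h s a ≤ x.Q (k + 1) h s a) :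
    x.OptimisticUpTo (k + 1) := by
  intro j hj h hh s
  rcases mem_Icc_or_eq_succ hj with hj | rfl
  · exact hV j hj h hh s
  · rcases mem_Icc_or_eq_succ hh with hh | rfl
    · rw [x.V_eq_sup' hh s (mem_Icc.2 ⟨Nat.le_add_left 1 k, Nat.succ_le_succ hk⟩)]
      exact sup'_mono_fun fun a _ => hQ h hh s a
    · rw [M.Vstar_terminal, (x.V_terminal _ s).1]

theorem GoodEvent.optimism {x : QLAlg M K cb δ} (G : x.GoodEvent)
    (hι : 1 / 4 ≤ iota S A K M.H δ) (hcb : 180 ≤ cb) (hk : k ≤ K) :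
    (∀ h ∈ Icc 1 M.H, ∀ s a, M.Qstar h s a ≤ x.Q (k + 1) h s a) ∧ x.OptimisticUpTo (k + 1) := by
  suffices h : x.OptimisticUpTo k ∧ ∀ h ∈ Icc 1 M.H, ∀ s a, M.Qstar h s a ≤ x.Q (k + 1) h s a from
    ⟨h.2, h.1.succ hk h.2⟩
  induction k with
  | zero =>
    refine ⟨fun j hj => by simp at hj, fun h hh s a => ?_⟩
    rw [x.Q_init h hh]
    exact M.Qstar_le (mem_Icc.1 hh).1 s a
  | succ k ih =>
    have hkK : k + 1 ∈ Icc 1 K := mem_Icc.2 ⟨Nat.le_add_left 1 k, hk⟩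
    obtain ⟨hV, hQ⟩ := ih (Nat.le_of_succ_le hk)
    replace hV := hV.succ (Nat.le_of_succ_le hk) hQ
    refine ⟨hV, fun h hh s a => ?_⟩
    rw [x.Q_upd (k + 1) hkK h hh]
    split_ifs with hv
    · exact le_min (Qstar_le_QR_succ G hι hcb hV hh hkK hv)
        (le_min (Qstar_le_QUCB_succ G (by linarith) (by linarith) hV hh hkK hv) (hQ h hh s a))
    · exact hQ h hh s a

/-- The event of the theorem, for a single run of the algorithm. -/
def IsOptimistic (x : QLAlg M K cb δ) : Prop :=
  ∀ s a, ∀ k ∈ Icc 1 K, ∀ h ∈ Icc 1 M.H, M.Qstar h s a ≤ x.Q k h s a ∧ M.Vstar h s ≤ x.V k h s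

theorem isOptimistic_of_le_one (x : QLAlg M K cb δ) (hK : K ≤ 1) : x.IsOptimistic := by
  intro s a k hk h hh
  obtain rfl : k = 1 := le_antisymm ((mem_Icc.1 hk).2.trans hK) (mem_Icc.1 hk).1
  rw [x.Q_init h hh, x.V_init h hh]
  exact ⟨M.Qstar_le (mem_Icc.1 hh).1 s a, M.Vstar_le (mem_Icc.1 hh).1 s⟩

theorem GoodEvent.isOptimistic {x : QLAlg M K cb δ} (G : x.GoodEvent)
    (hι : 1 / 4 ≤ iota S A K M.H δ) (hcb : 180 ≤ cb) : x.IsOptimistic := by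
  intro s a k hk h hh
  obtain ⟨j, rfl⟩ := Nat.exists_eq_add_of_le' (mem_Icc.1 hk).1
  obtain ⟨hQ, hV⟩ := G.optimism hι hcb (Nat.le_of_succ_le (mem_Icc.1 hk).2)
  exact ⟨hQ h hh s a, hV (j + 1) (by simp) h (Icc_subset_Icc_right (Nat.le_succ _) hh) s⟩

end QLAlg

/-! ## Measurability of the iterates -/

namespace QLAlg

section History

variable {S A : Type} [Fintype S] [Fintype A] [Nonempty S] [Nonempty A]
  [DecidableEq S] [DecidableEq A] {M : MDP S A} {K : ℕ} {cb δ : ℝ} {h k : ℕ}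
  {x y : QLAlg M K cb δ}

/-- The runs `x` and `y` follow the same trajectory in episode `k`. -/
structure SameEpisode (x y : QLAlg M K cb δ) (k : ℕ) : Prop where
  st : ∀ h ∈ Icc 1 (M.H + 1), x.st k h = y.st k h
  ac : ∀ h ∈ Icc 1 M.H, x.ac k h = y.ac k h

/-- The runs `x` and `y` hold the same counters and estimates at the beginning of episode `k`.
The quantities `V` and `dR` are left out, being functions of `Q` and `BR`. -/
structure SameEstimates (x y : QLAlg M K cb δ) (k : ℕ) : Prop where
  N : ∀ h ∈ Icc 1 M.H, x.N (k - 1) h = y.N (k - 1) h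
  Q : ∀ h ∈ Icc 1 M.H, x.Q k h = y.Q k h
  QUCB : ∀ h ∈ Icc 1 M.H, x.QUCB k h = y.QUCB k h
  QLCB : ∀ h ∈ Icc 1 M.H, x.QLCB k h = y.QLCB k h
  QR : ∀ h ∈ Icc 1 M.H, x.QR k h = y.QR k h
  VLCB : ∀ h ∈ Icc 1 (M.H + 1), x.VLCB k h = y.VLCB k h
  VR : ∀ h ∈ Icc 1 (M.H + 1), x.VR k h = y.VR k h
  uref : ∀ h ∈ Icc 1 M.H, x.uref k h = y.uref k h
  muRef : ∀ h ∈ Icc 1 M.H, x.muRef k h = y.muRef k h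
  sigRef : ∀ h ∈ Icc 1 M.H, x.sigRef k h = y.sigRef k h
  muAdv : ∀ h ∈ Icc 1 M.H, x.muAdv k h = y.muAdv k h
  sigAdv : ∀ h ∈ Icc 1 M.H, x.sigAdv k h = y.sigAdv k h
  BR : ∀ h ∈ Icc 1 M.H, x.BR k h = y.BR k h

theorem SameEpisode.isVisit_iff (e : SameEpisode x y k) (hh : h ∈ Icc 1 M.H) (s : S) (a : A) :
    s = x.st k h ∧ a = x.ac k h ↔ s = y.st k h ∧ a = y.ac k h := by
  rw [e.st h (Icc_subset_Icc_right (Nat.le_succ _) hh), e.ac h hh]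

theorem V_congr (hQ : ∀ h ∈ Icc 1 M.H, x.Q k h = y.Q k h) (hk : k ∈ Icc 1 (K + 1))
    (hh : h ∈ Icc 1 (M.H + 1)) : x.V k h = y.V k h := by
  ext s
  rcases mem_Icc_or_eq_succ hh with hh | rfl
  · rw [x.V_eq_sup' hh s hk, y.V_eq_sup' hh s hk, hQ h hh]
  · rw [(x.V_terminal k s).1, (y.V_terminal k s).1]

theorem uref_succ (x : QLAlg M K cb δ) (hh : h ∈ Icc 1 M.H) (hk : k ∈ Icc 1 K) (s : S) :
    x.uref (k + 1) h s =
      if s = x.st k h then 1 < x.V (k + 1) h s - x.VLCB (k + 1) h s else x.uref k h s := by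
  split_ifs with hs
  · subst hs
    by_cases hgap : 1 < x.V (k + 1) h (x.st k h) - x.VLCB (k + 1) h (x.st k h)
    · exact propext (iff_of_true (x.uref_upd_pos k hk h hh hgap) hgap)
    · exact propext (iff_of_false (x.uref_upd_neg k hk h hh hgap) hgap)
  · exact propext (x.uref_upd_other k hk h hh s hs)

namespace SameEstimates

theorem V (g : SameEstimates x y k) (hk : k ∈ Icc 1 K) (hh : h ∈ Icc 1 (M.H + 1)) :
    x.V k h = y.V k h :=
  V_congr g.Q (Icc_subset_Icc_right K.le_succ hk) hh

theorem one (x y : QLAlg M K cb δ) : SameEstimates x y 1 where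
  N h _ := by ext s a; rw [Nat.sub_self, x.N_init, y.N_init]
  Q h hh := by ext s a; rw [x.Q_init h hh, y.Q_init h hh]
  QUCB h hh := by ext s a; rw [x.QUCB_init h hh, y.QUCB_init h hh]
  QLCB h hh := by ext s a; rw [x.QLCB_init h hh, y.QLCB_init h hh]
  QR h hh := by ext s a; rw [x.QR_init h hh, y.QR_init h hh]
  VLCB h hh := by
    ext s
    rcases mem_Icc_or_eq_succ hh with hh | rfl
    · rw [x.VLCB_init h hh, y.VLCB_init h hh]
    · rw [(x.V_terminal 1 s).2.2, (y.V_terminal 1 s).2.2]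
  VR h hh := by
    ext s
    rcases mem_Icc_or_eq_succ hh with hh | rfl
    · rw [x.VR_init h hh, y.VR_init h hh]
    · rw [(x.V_terminal 1 s).2.1, (y.V_terminal 1 s).2.1]
  uref h _ := by ext s; exact iff_of_true (x.uref_init h s) (y.uref_init h s)
  muRef h _ := by ext s a; rw [(x.mom_init h s a).1, (y.mom_init h s a).1]
  sigRef h _ := by ext s a; rw [(x.mom_init h s a).2.1, (y.mom_init h s a).2.1]
  muAdv h _ := by ext s a; rw [(x.mom_init h s a).2.2.1, (y.mom_init h s a).2.2.1]
  sigAdv h _ := by ext s a; rw [(x.mom_init h s a).2.2.2.1, (y.mom_init h s a).2.2.2.1]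
  BR h _ := by ext s a; rw [(x.mom_init h s a).2.2.2.2.1, (y.mom_init h s a).2.2.2.2.1]

theorem N_end (g : SameEstimates x y k) (e : SameEpisode x y k) (hk : k ∈ Icc 1 K)
    (hh : h ∈ Icc 1 M.H) : x.N k h = y.N k h := by
  ext s a
  simp only [x.N_upd k hk h hh, y.N_upd k hk h hh, g.N h hh, e.isVisit_iff hh]

theorem QUCB_succ (g : SameEstimates x y k) (e : SameEpisode x y k) (hk : k ∈ Icc 1 K)
    (hh : h ∈ Icc 1 M.H) : x.QUCB (k + 1) h = y.QUCB (k + 1) h := by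
  ext s a
  simp only [x.QUCB_upd k hk h hh, y.QUCB_upd k hk h hh, g.QUCB h hh, e.isVisit_iff hh,
    g.N_end e hk hh, e.st _ (succ_mem_Icc hh), g.V hk (succ_mem_Icc hh)]

theorem QLCB_succ (g : SameEstimates x y k) (e : SameEpisode x y k) (hk : k ∈ Icc 1 K)
    (hh : h ∈ Icc 1 M.H) : x.QLCB (k + 1) h = y.QLCB (k + 1) h := by
  ext s a
  simp only [x.QLCB_upd k hk h hh, y.QLCB_upd k hk h hh, g.QLCB h hh, e.isVisit_iff hh,
    g.N_end e hk hh, e.st _ (succ_mem_Icc hh), g.VLCB _ (succ_mem_Icc hh)]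

theorem muRef_succ (g : SameEstimates x y k) (e : SameEpisode x y k) (hk : k ∈ Icc 1 K)
    (hh : h ∈ Icc 1 M.H) : x.muRef (k + 1) h = y.muRef (k + 1) h := by
  ext s a
  simp only [x.muRef_upd k hk h hh, y.muRef_upd k hk h hh, g.muRef h hh, e.isVisit_iff hh,
    g.N_end e hk hh, e.st _ (succ_mem_Icc hh), g.VR _ (succ_mem_Icc hh)]

theorem sigRef_succ (g : SameEstimates x y k) (e : SameEpisode x y k) (hk : k ∈ Icc 1 K)
    (hh : h ∈ Icc 1 M.H) : x.sigRef (k + 1) h = y.sigRef (k + 1) h := by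
  ext s a
  simp only [x.sigRef_upd k hk h hh, y.sigRef_upd k hk h hh, g.sigRef h hh, e.isVisit_iff hh,
    g.N_end e hk hh, e.st _ (succ_mem_Icc hh), g.VR _ (succ_mem_Icc hh)]

theorem muAdv_succ (g : SameEstimates x y k) (e : SameEpisode x y k) (hk : k ∈ Icc 1 K)
    (hh : h ∈ Icc 1 M.H) : x.muAdv (k + 1) h = y.muAdv (k + 1) h := by
  ext s a
  simp only [x.muAdv_upd k hk h hh, y.muAdv_upd k hk h hh, g.muAdv h hh, e.isVisit_iff hh,
    g.N_end e hk hh, e.st _ (succ_mem_Icc hh), g.V hk (succ_mem_Icc hh),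
    g.VR _ (succ_mem_Icc hh)]

theorem sigAdv_succ (g : SameEstimates x y k) (e : SameEpisode x y k) (hk : k ∈ Icc 1 K)
    (hh : h ∈ Icc 1 M.H) : x.sigAdv (k + 1) h = y.sigAdv (k + 1) h := by
  ext s a
  simp only [x.sigAdv_upd k hk h hh, y.sigAdv_upd k hk h hh, g.sigAdv h hh, e.isVisit_iff hh,
    g.N_end e hk hh, e.st _ (succ_mem_Icc hh), g.V hk (succ_mem_Icc hh),
    g.VR _ (succ_mem_Icc hh)]

theorem BR_succ (g : SameEstimates x y k) (e : SameEpisode x y k) (hk : k ∈ Icc 1 K)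
    (hh : h ∈ Icc 1 M.H) : x.BR (k + 1) h = y.BR (k + 1) h := by
  ext s a
  simp only [x.BR_upd k hk h hh, y.BR_upd k hk h hh, g.BR h hh, e.isVisit_iff hh,
    g.N_end e hk hh, g.muRef_succ e hk hh, g.sigRef_succ e hk hh, g.muAdv_succ e hk hh,
    g.sigAdv_succ e hk hh]

theorem bR_eq (g : SameEstimates x y k) (e : SameEpisode x y k) (hk : k ∈ Icc 1 K)
    (hh : h ∈ Icc 1 M.H) : x.bR k h = y.bR k h := by
  simp only [x.bR_def k hk h hh, y.bR_def k hk h hh, x.dR_upd k hk h hh, y.dR_upd k hk h hh,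
    and_self, if_true, e.st h (Icc_subset_Icc_right (Nat.le_succ _) hh), e.ac h hh,
    g.N_end e hk hh, g.BR h hh, g.BR_succ e hk hh]

theorem QR_succ (g : SameEstimates x y k) (e : SameEpisode x y k) (hk : k ∈ Icc 1 K)
    (hh : h ∈ Icc 1 M.H) : x.QR (k + 1) h = y.QR (k + 1) h := by
  ext s a
  simp only [x.QR_upd k hk h hh, y.QR_upd k hk h hh, g.QR h hh, e.isVisit_iff hh,
    g.N_end e hk hh, e.st _ (succ_mem_Icc hh), g.V hk (succ_mem_Icc hh),
    g.VR _ (succ_mem_Icc hh), g.muRef_succ e hk hh, g.bR_eq e hk hh]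

theorem Q_succ (g : SameEstimates x y k) (e : SameEpisode x y k) (hk : k ∈ Icc 1 K)
    (hh : h ∈ Icc 1 M.H) : x.Q (k + 1) h = y.Q (k + 1) h := by
  ext s a
  simp only [x.Q_upd k hk h hh, y.Q_upd k hk h hh, g.Q h hh, e.isVisit_iff hh,
    g.QUCB_succ e hk hh, g.QR_succ e hk hh]

theorem V_succ (g : SameEstimates x y k) (e : SameEpisode x y k) (hk : k ∈ Icc 1 K)
    (hh : h ∈ Icc 1 M.H) : x.V (k + 1) h = y.V (k + 1) h :=
  V_congr (fun _ => g.Q_succ e hk) (succ_mem_Icc hk) (Icc_subset_Icc_right (Nat.le_succ _) hh)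

theorem VLCB_succ (g : SameEstimates x y k) (e : SameEpisode x y k) (hk : k ∈ Icc 1 K)
    (hh : h ∈ Icc 1 (M.H + 1)) : x.VLCB (k + 1) h = y.VLCB (k + 1) h := by
  ext s
  rcases mem_Icc_or_eq_succ hh with hH | rfl
  · simp only [x.VLCB_upd k hk h hH, y.VLCB_upd k hk h hH, g.VLCB h hh, e.st h hh,
      g.QLCB_succ e hk hH]
  · rw [(x.V_terminal (k + 1) s).2.2, (y.V_terminal (k + 1) s).2.2]

theorem VR_succ (g : SameEstimates x y k) (e : SameEpisode x y k) (hk : k ∈ Icc 1 K)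
    (hh : h ∈ Icc 1 (M.H + 1)) : x.VR (k + 1) h = y.VR (k + 1) h := by
  classical
  ext s
  rcases mem_Icc_or_eq_succ hh with hH | rfl
  · simp only [x.VR_succ hH hk, y.VR_succ hH hk, g.VR h hh, e.st h hh, g.V_succ e hk hH,
      g.VLCB_succ e hk hh, g.uref h hH]
  · rw [(x.V_terminal (k + 1) s).2.1, (y.V_terminal (k + 1) s).2.1]

theorem uref_succ (g : SameEstimates x y k) (e : SameEpisode x y k) (hk : k ∈ Icc 1 K)
    (hh : h ∈ Icc 1 M.H) : x.uref (k + 1) h = y.uref (k + 1) h := by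
  have hh' := Icc_subset_Icc_right (Nat.le_succ _) hh
  ext s
  simp only [x.uref_succ hh hk, y.uref_succ hh hk, g.uref h hh, e.st h hh', g.V_succ e hk hh,
    g.VLCB_succ e hk hh']

theorem succ (g : SameEstimates x y k) (e : SameEpisode x y k) (hk : k ∈ Icc 1 K) :
    SameEstimates x y (k + 1) where
  N _ hh := g.N_end e hk hh
  Q _ hh := g.Q_succ e hk hh
  QUCB _ hh := g.QUCB_succ e hk hh
  QLCB _ hh := g.QLCB_succ e hk hh
  QR _ hh := g.QR_succ e hk hh
  VLCB _ hh := g.VLCB_succ e hk hh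
  VR _ hh := g.VR_succ e hk hh
  uref _ hh := g.uref_succ e hk hh
  muRef _ hh := g.muRef_succ e hk hh
  sigRef _ hh := g.sigRef_succ e hk hh
  muAdv _ hh := g.muAdv_succ e hk hh
  sigAdv _ hh := g.sigAdv_succ e hk hh
  BR _ hh := g.BR_succ e hk hh

theorem of_sameEpisode (hk : k ∈ Icc 1 K) (e : ∀ j ∈ Ico 1 k, SameEpisode x y j) :
    SameEstimates x y k := by
  obtain ⟨hk1, hkK⟩ := mem_Icc.1 hk
  clear hk
  induction k, hk1 using Nat.le_induction with
  | base => exact one x y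
  | succ k hk1 ih =>
    have past := ih (fun j hj => e j (Ico_subset_Ico_right k.le_succ hj)) (Nat.le_of_succ_le hkK)
    exact past.succ (e k (mem_Ico.2 ⟨hk1, k.lt_succ_self⟩))
      (mem_Icc.2 ⟨hk1, Nat.le_of_succ_le hkK⟩)

end SameEstimates

end History

section Measurability

variable {S A : Type} [Fintype S] [Fintype A] [Nonempty S] [Nonempty A] [DecidableEq S]
  [DecidableEq A] [MeasurableSpace S] [MeasurableSpace A] [MeasurableSingletonClass S]
  [MeasurableSingletonClass A] {M : MDP S A} {K : ℕ} {cb δ : ℝ} {Ω : Type}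
  {m0 : MeasurableSpace Ω} {μ : Measure Ω} {𝓕 : Filtration ℕ m0} {alg : Ω → QLAlg M K cb δ}
  {h j k : ℕ}

theorem measurable_of_sameEpisode
    (htr : IsMDPTrajectory μ M K 𝓕 (fun k h ω => (alg ω).st k h) fun k h ω => (alg ω).ac k h)
    (hk : k ∈ Icc 1 K) {f : Ω → ℝ}
    (hf : ∀ ω ω', (∀ j ∈ Ico 1 k, SameEpisode (alg ω) (alg ω') j) → f ω = f ω') :
    Measurable[𝓕 ((k - 1) * M.H + 1)] f := by
  obtain ⟨hst, hac, -⟩ := htr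
  have mem_K {j : ℕ} (hj : j ∈ Ico 1 k) : j ∈ Icc 1 K :=
    mem_Icc.2 ⟨(mem_Ico.1 hj).1, (mem_Ico.1 hj).2.le.trans (mem_Icc.1 hk).2⟩
  have time_le {j i : ℕ} (hj : j ∈ Ico 1 k) (hi : i ≤ M.H + 1) :
      (j - 1) * M.H + i ≤ (k - 1) * M.H + 1 := by
    obtain ⟨hj1, hjk⟩ := mem_Ico.1 hj
    have := Nat.mul_le_mul_right M.H (show j - 1 + 1 ≤ k - 1 by omega)
    rw [add_one_mul] at this
    omega
  let past (ω : Ω) : (↥(Ico 1 k ×ˢ Icc 1 (M.H + 1)) → S) × (↥(Ico 1 k ×ˢ Icc 1 M.H) → A) :=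
    (fun i => (alg ω).st i.1.1 i.1.2, fun i => (alg ω).ac i.1.1 i.1.2)
  have measurable_past : Measurable[𝓕 ((k - 1) * M.H + 1)] past := by
    refine .prodMk (@measurable_pi_lambda _ _ _ (𝓕 _) _ _ fun ⟨_, hi⟩ => ?_)
      (@measurable_pi_lambda _ _ _ (𝓕 _) _ _ fun ⟨_, hi⟩ => ?_)
    all_goals obtain ⟨hj, hi⟩ := mem_product.1 hi
    · exact (hst _ (mem_K hj) _ hi).mono (𝓕.mono (time_le hj (mem_Icc.1 hi).2)) le_rfl
    · exact (hac _ (mem_K hj) _ hi).mono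
        (𝓕.mono (time_le hj ((mem_Icc.1 hi).2.trans (Nat.le_succ _)))) le_rfl
  have factors : Function.FactorsThrough f past := fun ω ω' heq => hf ω ω' fun j hj =>
    ⟨fun i hi => congrFun (congrArg Prod.fst heq) ⟨(j, i), mem_product.2 ⟨hj, hi⟩⟩,
      fun i hi => congrFun (congrArg Prod.snd heq) ⟨(j, i), mem_product.2 ⟨hj, hi⟩⟩⟩
  rw [← factors.extend_comp (fun _ => (0 : ℝ))]
  exact (measurable_of_countable _).comp measurable_past

/-- The information available at step `h` of each episode, in the time index of
`IsMDPTrajectory`. -/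
def episodeFiltration (𝓕 : Filtration ℕ m0) (H h : ℕ) : Filtration ℕ m0 where
  seq k := 𝓕 ((k - 1) * H + h)
  mono' _ _ hkl := 𝓕.mono (by gcongr)
  le' _ := 𝓕.le _

theorem isVisitSampling
    (htr : IsMDPTrajectory μ M K 𝓕 (fun k h ω => (alg ω).st k h) fun k h ω => (alg ω).ac k h)
    (hh : h ∈ Icc 1 M.H) (s : S) (a : A) :
    IsVisitSampling μ (episodeFiltration 𝓕 M.H h) K (fun ω => (alg ω).IsVisit h s a)
      (M.P h s a) (fun ω j => (alg ω).st j (h + 1)) where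
  mem_stdSimplex := M.P_mem_stdSimplex h s a
  measurableSet_vis k hk :=
    (htr.1 k hk h (Icc_subset_Icc_right (Nat.le_succ _) hh)
      (MeasurableSet.of_discrete (s := {t | s = t}))).inter
      (htr.2.1 k hk h hh (MeasurableSet.of_discrete (s := {b | a = b})))
  measurable_sample k hk := (htr.1 k hk (h + 1) (succ_mem_Icc hh)).mono
    (𝓕.mono (by
      obtain ⟨j, rfl⟩ := Nat.exists_eq_add_of_le' (mem_Icc.1 hk).1
      rw [Nat.add_sub_cancel, Nat.add_sub_cancel, add_one_mul]
      have := M.H_pos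
      omega)) le_rfl
  exists_hasCondDist k hk := by
    refine ⟨fun ω => M.P h ((alg ω).st k h) ((alg ω).ac k h),
      ⟨fun s' => ?_, fun ω => M.P_mem_stdSimplex _ _ _, htr.2.2 k hk h hh⟩, fun ω hv => ?_⟩
    · exact (measurable_of_countable fun z : S × A => M.P h z.1 z.2 s').comp
        ((htr.1 k hk h (Icc_subset_Icc_right (Nat.le_succ _) hh)).prodMk (htr.2.1 k hk h hh))
    · rw [hv.1, hv.2]

theorem measurable_refSample
    (htr : IsMDPTrajectory μ M K 𝓕 (fun k h ω => (alg ω).st k h) fun k h ω => (alg ω).ac k h)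
    (hh : h ∈ Icc 1 M.H) (hk : k ∈ Icc 1 K) (s : S) :
    Measurable[episodeFiltration 𝓕 M.H h k] fun ω => (alg ω).refSample h k s := by
  refine (measurable_of_sameEpisode htr hk fun ω ω' e => ?_).mono
    (𝓕.mono (Nat.add_le_add_left (mem_Icc.1 hh).1 _)) le_rfl
  rw [refSample, refSample, (SameEstimates.of_sameEpisode hk e).VR (h + 1) (succ_mem_Icc hh)]

theorem measurable_advSample
    (htr : IsMDPTrajectory μ M K 𝓕 (fun k h ω => (alg ω).st k h) fun k h ω => (alg ω).ac k h)
    (hh : h ∈ Icc 1 M.H) (hk : k ∈ Icc 1 K) (s : S) :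
    Measurable[episodeFiltration 𝓕 M.H h k] fun ω => (alg ω).advSample h k s := by
  refine .sub ?_ (measurable_refSample htr hh hk s)
  refine (measurable_of_sameEpisode htr hk fun ω ω' e => ?_).mono
    (𝓕.mono (Nat.add_le_add_left (mem_Icc.1 hh).1 _)) le_rfl
  rw [(SameEstimates.of_sameEpisode hk e).V hk (succ_mem_Icc hh)]

end Measurability

end QLAlg

/-! ## Probability of the concentration event -/

section Confidence

variable {S A : Type} [Fintype S] [Fintype A] [Nonempty S] [Nonempty A] {K H : ℕ} {δ : ℝ}

theorem two_le_card_mul_card_mul (hK : 2 ≤ K) (hH : 0 < H) :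
    (2 : ℝ) ≤ Fintype.card S * Fintype.card A * (K * H) := by
  have hSA : 1 ≤ Fintype.card S * Fintype.card A := Nat.mul_pos Fintype.card_pos Fintype.card_pos
  exact_mod_cast Nat.mul_le_mul hSA (Nat.mul_le_mul hK hH)

theorem quarter_le_iota (hK : 2 ≤ K) (hH : 0 < H) (hδ : 0 < δ) (hδ1 : δ < 1) :
    1 / 4 ≤ iota S A K H δ := by
  have two_le : (2 : ℝ) ≤ Fintype.card S * Fintype.card A * (K * H) / δ :=
    (two_le_card_mul_card_mul hK hH).trans (le_div_self (by positivity) hδ hδ1.le)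
  have := Real.log_le_log two_pos two_le
  rw [iota]
  linarith [Real.log_two_gt_d9]

theorem exp_neg_six_mul_iota (hK : 0 < K) (hH : 0 < H) (hδ : 0 < δ) :
    Real.exp (-(6 * iota S A K H δ)) =
      (δ / (Fintype.card S * Fintype.card A * (K * H))) ^ 6 := by
  rw [iota, Real.exp_neg, show (6 : ℝ) = (6 : ℕ) by norm_num, Real.exp_nat_mul,
    Real.exp_log (by positivity), ← inv_pow, inv_div]

theorem nine_mul_card_mul_exp_le (hK : 2 ≤ K) (hH : 0 < H) (hδ : 0 < δ) (hδ1 : δ < 1) :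
    9 * (Fintype.card S * Fintype.card A * (K * H) * (K + 1) *
      Real.exp (-(6 * iota S A K H δ))) ≤ δ := by
  have two_le := two_le_card_mul_card_mul (S := S) (A := A) hK hH
  have K_le : (K : ℝ) ≤ Fintype.card S * Fintype.card A * (K * H) := by
    have : 1 ≤ Fintype.card S * Fintype.card A * H :=
      Nat.mul_pos (Nat.mul_pos Fintype.card_pos Fintype.card_pos) hH
    exact_mod_cast (Nat.le_mul_of_pos_left K this).trans_eq (by ring)
  rw [exp_neg_six_mul_iota (by omega) hH hδ]
  set n : ℝ := Fintype.card S * Fintype.card A * (K * H)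
  have : 0 < n := by linarith
  calc 9 * (n * (K + 1) * (δ / n) ^ 6)
      ≤ 9 * (n * (n + n / 2) * (δ / n) ^ 6) := by gcongr; linarith
    _ = 27 / 2 * δ ^ 6 / n ^ 4 := by field_simp; ring
    _ ≤ 27 / 2 * δ / 2 ^ 4 := by
        gcongr
        exact pow_le_of_le_one hδ.le hδ1.le (by norm_num)
    _ ≤ δ := by linarith

end Confidence

namespace QLAlg

variable {S A : Type} [Fintype S] [Fintype A] [Nonempty S] [Nonempty A] [DecidableEq S]
  [DecidableEq A] [MeasurableSpace S] [MeasurableSpace A] [MeasurableSingletonClass S]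
  [MeasurableSingletonClass A] {M : MDP S A} {K : ℕ} {cb δ : ℝ} {Ω : Type}
  {m0 : MeasurableSpace Ω} {μ : Measure Ω} [IsProbabilityMeasure μ] {𝓕 : Filtration ℕ m0}
  {alg : Ω → QLAlg M K cb δ}

theorem measureReal_not_concentrates_le
    (htr : IsMDPTrajectory μ M K 𝓕 (fun k h ω => (alg ω).st k h) fun k h ω => (alg ω).ac k h)
    (hι : 1 ≤ 6 * iota S A K M.H δ) (m : ℕ) {f : Ω → ℕ → ℕ → S → ℝ}
    (hmeas : ∀ h ∈ Icc 1 M.H, ∀ k ∈ Icc 1 K, ∀ s,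
      Measurable[episodeFiltration 𝓕 M.H h k] fun ω => f ω h k s)
    (hf : ∀ ω h k s, |f ω h k s| ≤ M.H) :
    μ.real {ω | ¬(alg ω).Concentrates m (f ω)} ≤
      3 * (Fintype.card S * Fintype.card A * (K * M.H) * (K + 1) *
        Real.exp (-(6 * iota S A K M.H δ))) := by
  let fails (i : ℕ × S × A) : Set Ω :=
    {ω | ∃ k ∈ Icc 1 K, 1 ≤ visitCount ((alg ω).IsVisit i.1 i.2.1 i.2.2) k ∧
      ¬SamplingBounds m ((alg ω).IsVisit i.1 i.2.1 i.2.2) (M.P i.1 i.2.1 i.2.2)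
        (fun j => (alg ω).st j (i.1 + 1)) (f ω i.1) M.H (6 * iota S A K M.H δ) k}
  have cover : {ω | ¬(alg ω).Concentrates m (f ω)} ⊆ ⋃ i ∈ Icc 1 M.H ×ˢ univ, fails i := by
    intro ω hω
    simp only [Concentrates, Set.mem_ofPred_eq, not_forall] at hω
    obtain ⟨h, hh, s, a, k, hk, hcount, hfail⟩ := hω
    exact Set.mem_biUnion (x := (h, s, a)) (mem_product.2 ⟨hh, mem_univ _⟩) ⟨k, hk, hcount, hfail⟩
  calc μ.real {ω | ¬(alg ω).Concentrates m (f ω)}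
      ≤ ∑ i ∈ Icc 1 M.H ×ˢ univ, μ.real (fails i) :=
        (measureReal_mono cover (measure_ne_top _ _)).trans (measureReal_biUnion_finset_le _ _)
    _ ≤ #(Icc 1 M.H ×ˢ (univ : Finset (S × A))) •
          (3 * (K * (K + 1) * Real.exp (-(6 * iota S A K M.H δ)))) :=
        sum_le_card_nsmul _ _ _ fun ⟨h, s, a⟩ hi =>
          have hh := (mem_product.1 hi).1
          (isVisitSampling htr hh s a).measureReal_not_samplingBounds_le
            (Nat.cast_pos.2 M.H_pos) (hmeas h hh) (fun ω => hf ω h) hι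
    _ = _ := by
        rw [card_product, Nat.card_Icc, Nat.add_sub_cancel, card_univ, Fintype.card_prod,
          nsmul_eq_mul]
        push_cast
        ring

theorem measureReal_not_goodEvent_le
    (htr : IsMDPTrajectory μ M K 𝓕 (fun k h ω => (alg ω).st k h) fun k h ω => (alg ω).ac k h)
    (hK : 2 ≤ K) (hδ : 0 < δ) (hδ1 : δ < 1) : μ.real {ω | ¬(alg ω).GoodEvent} ≤ δ := by
  have hι : 1 ≤ 6 * iota S A K M.H δ := by
    linarith [quarter_le_iota (S := S) (A := A) hK M.H_pos hδ hδ1]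
  have opt := measureReal_not_concentrates_le htr hι M.H (f := fun _ h _ => M.Vstar (h + 1))
    (fun _ _ _ _ _ => measurable_const)
    fun _ h _ s => by
      rw [abs_of_nonneg (M.Vstar_nonneg _ s)]
      exact M.Vstar_le (Nat.le_add_left 1 h) s
  have ref := measureReal_not_concentrates_le htr hι 0 (f := fun ω => (alg ω).refSample)
    (fun _ hh _ hk => measurable_refSample htr hh hk) fun ω => (alg ω).abs_refSample_le
  have adv := measureReal_not_concentrates_le htr hι M.H (f := fun ω => (alg ω).advSample)
    (fun _ hh _ hk => measurable_advSample htr hh hk) fun ω => (alg ω).abs_advSample_le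
  have cover : {ω | ¬(alg ω).GoodEvent} ⊆
      {ω | ¬(alg ω).Concentrates M.H fun h _ => M.Vstar (h + 1)} ∪
        ({ω | ¬(alg ω).Concentrates 0 (alg ω).refSample} ∪
          {ω | ¬(alg ω).Concentrates M.H (alg ω).advSample}) := by
    intro ω hω
    by_contra! hnot
    simp only [Set.mem_union, Set.mem_ofPred_eq, not_or, not_not] at hnot
    exact hω ⟨hnot.1, hnot.2.1, hnot.2.2⟩
  have total := (measureReal_mono (μ := μ) cover).trans (measureReal_union_le _ _)
  have ref_adv := measureReal_union_le (μ := μ)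
    {ω | ¬(alg ω).Concentrates 0 (alg ω).refSample}
    {ω | ¬(alg ω).Concentrates M.H (alg ω).advSample}
  linarith [nine_mul_card_mul_exp_le (S := S) (A := A) hK M.H_pos hδ hδ1]

end QLAlg

/-- **Optimism of the Q-EarlySettled-Advantage iterates** (Lemma 2 of the paper).
There is a universal constant `c₀ > 0` such that for any MDP, any `δ ∈ (0,1)` and any
bonus constant `cb ≥ c₀`, if the algorithm is run for `K ≥ 1` episodes on trajectories
generated by the MDP, then with probability at least `1 - δ`,
`Q_h^k(s,a) ≥ Q_h^⋆(s,a)` and `V_h^k(s) ≥ V_h^⋆(s)` simultaneously for all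
`(s,a,k,h) ∈ S × A × [K] × [H]`. -/
theorem optimism_of_QEarlySettledAdvantage :
    ∃ c₀ : ℝ, 0 < c₀ ∧
      ∀ (S A : Type) [Fintype S] [Fintype A] [Nonempty S] [Nonempty A]
        [DecidableEq S] [DecidableEq A]
        [MeasurableSpace S] [MeasurableSingletonClass S]
        [MeasurableSpace A] [MeasurableSingletonClass A]
        (M : MDP S A) (K : ℕ) (cb δ : ℝ)
        (Ω : Type) (m0 : MeasurableSpace Ω) (μ : Measure Ω)
        (𝓕 : Filtration ℕ m0) (alg : Ω → QLAlg M K cb δ),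
        IsProbabilityMeasure μ → 0 < δ → δ < 1 → 1 ≤ K → c₀ ≤ cb →
        IsMDPTrajectory μ M K 𝓕 (fun k h ω => (alg ω).st k h)
          (fun k h ω => (alg ω).ac k h) →
        1 - δ ≤ (μ {ω | ∀ s a, ∀ k ∈ Icc 1 K, ∀ h ∈ Icc 1 M.H,
            M.Qstar h s a ≤ (alg ω).Q k h s a ∧ M.Vstar h s ≤ (alg ω).V k h s}).toReal := by
  refine ⟨180, by norm_num, ?_⟩
  intro S A _ _ _ _ _ _ _ _ _ _ M K cb δ Ω m0 μ 𝓕 alg _ hδ hδ1 hK hcb htr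
  change 1 - δ ≤ μ.real {ω | (alg ω).IsOptimistic}
  rcases hK.eq_or_lt with rfl | hK
  · have sure : {ω | (alg ω).IsOptimistic} = Set.univ :=
      Set.eq_univ_of_forall fun ω => (alg ω).isOptimistic_of_le_one le_rfl
    rw [sure, probReal_univ]
    linarith
  · have hι := quarter_le_iota (S := S) (A := A) hK M.H_pos hδ hδ1
    have cover : Set.univ ⊆ {ω | (alg ω).IsOptimistic} ∪ {ω | ¬(alg ω).GoodEvent} := fun ω _ =>
      (em (alg ω).GoodEvent).imp_left fun G => G.isOptimistic hι hcb
    have total := (measureReal_mono (μ := μ) cover).trans (measureReal_union_le _ _)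
    rw [probReal_univ] at total
    linarith [QLAlg.measureReal_not_goodEvent_le htr hK hδ hδ1]
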